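/- For every natural number S and every k ∈ {1,2,3} there exists a polynomial map f : ℝ² → ℝ² (both coordinate functions real polynomials in two variables, of degree at least 2) having at least S distinct sinks and k pairwise disjoint period doubling Cantor attractors. -/

import Mathlib

open Filter Set

/-- `f : ℝ² → ℝ²` is a polynomial map of degree at least 2: both coordinate functions are
real polynomials in two variables, and the degree of the map is at least 2. -/
def IsPolyMapDegTwo (f : ℝ × ℝ → ℝ × ℝ) : Prop :=
  ∃ P Q : MvPolynomial (Fin 2) ℝ,
    2 ≤ max P.totalDegree Q.totalDegree ∧
    ∀ p : ℝ × ℝ,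
      f p = (MvPolynomial.eval ![p.1, p.2] P, MvPolynomial.eval ![p.1, p.2] Q)

/-- `p` is a sink of `f`. -/
def IsSink (f : ℝ × ℝ → ℝ × ℝ) (p : ℝ × ℝ) (n : ℕ) : Prop :=
  1 ≤ n ∧ f^[n] p = p ∧
    ∃ W : Set (ℝ × ℝ), IsOpen W ∧ p ∈ W ∧
      ∀ x ∈ W, Tendsto (fun k => f^[k * n] x) atTop (nhds p)

/-- The forward orbit of a point. -/
def fwdOrbit (f : ℝ × ℝ → ℝ × ℝ) (p : ℝ × ℝ) : Set (ℝ × ℝ) :=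
  Set.range fun k => f^[k] p

/-- `f` has at least `S` distinct sinks. -/
def HasAtLeastSinks (f : ℝ × ℝ → ℝ × ℝ) (S : ℕ) : Prop :=
  ∃ (p : Fin S → ℝ × ℝ) (n : Fin S → ℕ),
    (∀ i, IsSink f (p i) (n i)) ∧
    Pairwise fun i j => Disjoint (fwdOrbit f (p i)) (fwdOrbit f (p j))

/-- `A` is a period doubling Cantor attractor of `f`. -/
def IsPDCantorAttractor (f : ℝ × ℝ → ℝ × ℝ) (A : Set (ℝ × ℝ)) : Prop :=
  IsCompact A ∧ f '' A = A ∧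
    (∃ e : A ≃ₜ ℤ_[2], ∀ (x : A) (hx : f ↑x ∈ A), e ⟨f ↑x, hx⟩ = e x + 1) ∧
    ∃ U : Set (ℝ × ℝ), IsOpen U ∧ A ⊆ U ∧
      ∀ᵐ x ∂MeasureTheory.volume, x ∈ U →
        (omegaLimit atTop (fun n : ℕ => f^[n]) {x} ∩ A).Nonempty

/-!
Take a product map `(x, y) ↦ (P x, Q y)`. If `Q` has superattracting fixed points `0, …, N - 1`,
the lines `y = i` are attracting, so each sink and each period doubling attractor of `P` reappears
at `N` heights. Hence it suffices to find one polynomial `P` with an attracting fixed point and a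
period doubling attractor that attracts almost every point near it. The quartic
`1 - g * (1 - x ^ 2) ^ 2` has the fixed critical point `1` for every `g`, and `g` is chosen by
nested intervals so that the critical point `0` is infinitely renormalizable of period doubling
type.

To see that the closure of the orbit of `0` is a 2-adic adding machine, we need the `n`-th level
intervals to shrink uniformly (real bounds). The quartic is a composition of affine maps and
squarings, so it expands cross-ratios, and so do all its iterates. Every renormalization extends
injectively beyond its critical value by a definite factor, and cross-ratio expansion transports
this space to all intervals of the level, whose lengths therefore decay geometrically. The same
expansion rules out spurious fixed points of the renormalizations, so that every orbit near `0`
descends through all levels, unless it hits one of their countably many end points.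
-/

/-! ### Sequences, sign changes and attracting fixed points -/

section Preliminaries

theorem exists_seq_of_forall_exists_step {α : Type*} {P : ℕ → α → Prop} {R : ℕ → α → α → Prop}
    {x₀ : α} (h₀ : P 0 x₀) (step : ∀ n x, P n x → ∃ y, P (n + 1) y ∧ R n x y) :
    ∃ s : ℕ → α, s 0 = x₀ ∧ (∀ n, P n (s n)) ∧ ∀ n, R n (s n) (s (n + 1)) := by
  choose! next hP hR using step
  let s : ℕ → α := fun n => Nat.rec x₀ next n
  have hs : ∀ n, P n (s n) := fun n => by
    induction n with
    | zero => exact h₀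
    | succ n ih => exact hP n _ ih
  exact ⟨s, rfl, hs, fun n => hR n _ (hs n)⟩

theorem exists_last_zero {v : ℝ → ℝ} {a b : ℝ} (hv : ContinuousOn v (Icc a b)) (hab : a ≤ b)
    (ha : v a ≤ 0) (hb : 0 < v b) :
    ∃ c ∈ Ico a b, v c = 0 ∧ ∀ x ∈ Ioc c b, 0 < v x := by
  have hcompact : IsCompact (Icc a b ∩ v ⁻¹' Iic 0) :=
    isCompact_Icc.of_isClosed_subset (hv.preimage_isClosed_of_isClosed isClosed_Icc isClosed_Iic)
      inter_subset_left
  obtain ⟨c, ⟨⟨hac, hcb⟩, hc⟩, hmax⟩ :=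
    hcompact.exists_isGreatest ⟨a, left_mem_Icc.2 hab, ha⟩
  have hpos : ∀ x ∈ Ioc c b, 0 < v x := fun x hx => by
    by_contra! hx0
    exact hx.1.not_ge (hmax ⟨⟨hac.trans hx.1.le, hx.2⟩, hx0⟩)
  obtain ⟨z, hz, hvz⟩ :=
    intermediate_value_Icc hcb (hv.mono (Icc_subset_Icc_left hac)) ⟨hc, hb.le⟩
  have hzc : z = c := le_antisymm (hmax ⟨⟨hac.trans hz.1, hz.2⟩, hvz.le⟩) hz.1
  refine ⟨c, ⟨hac, hcb.lt_of_ne ?_⟩, hzc ▸ hvz, hpos⟩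
  rintro rfl
  exact hb.not_ge hc

theorem exists_first_zero {v : ℝ → ℝ} {a b : ℝ} (hv : ContinuousOn v (Icc a b)) (hab : a ≤ b)
    (ha : v a < 0) (hb : 0 ≤ v b) :
    ∃ c ∈ Ioc a b, v c = 0 ∧ ∀ x ∈ Ico a c, v x < 0 := by
  have hcont : ContinuousOn (fun x => -v (-x)) (Icc (-b) (-a)) :=
    (hv.comp continuousOn_neg fun x hx => ⟨le_neg_of_le_neg hx.2, neg_le_of_neg_le hx.1⟩).neg
  obtain ⟨c, ⟨hbc, hca⟩, hvc, hneg⟩ :=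
    exists_last_zero hcont (neg_le_neg hab) (by simpa) (by simpa)
  refine ⟨-c, ⟨lt_neg_of_lt_neg hca, neg_le_of_neg_le hbc⟩, neg_eq_zero.1 hvc, fun x hx => ?_⟩
  simpa using hneg (-x) ⟨lt_neg_of_lt_neg hx.2, neg_le_neg hx.1⟩

theorem exists_iterate_lt {h : ℝ → ℝ} {a b : ℝ} (hc : ContinuousOn h (Icc a b))
    (hlt : ∀ x ∈ Icc a b, h x < x) : ∃ i, h^[i] b < a := by
  by_contra! hge
  have hmem : ∀ i, h^[i] b ∈ Icc a b := fun i => by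
    induction i with
    | zero => exact right_mem_Icc.2 (hge 0)
    | succ i ih =>
      refine ⟨hge _, ?_⟩
      rw [Function.iterate_succ_apply']
      exact (hlt _ ih).le.trans ih.2
  have hanti : Antitone fun i => h^[i] b := antitone_nat_of_succ_le fun i => by
    rw [Function.iterate_succ_apply']
    exact (hlt _ (hmem i)).le
  have hlim := tendsto_atTop_ciInf hanti ⟨a, forall_mem_range.2 hge⟩
  have hL := isClosed_Icc.mem_of_tendsto hlim (Eventually.of_forall hmem)
  have hlim' := (hc _ hL).tendsto.comp
    (tendsto_nhdsWithin_iff.2 ⟨hlim, Eventually.of_forall hmem⟩)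
  refine (hlt _ hL).ne (tendsto_nhds_unique hlim' ?_)
  exact (hlim.comp (tendsto_add_atTop_nat 1)).congr fun i => Function.iterate_succ_apply' h i b

theorem eventually_tendsto_iterate_of_hasFDerivAt {E : Type*} [NormedAddCommGroup E]
    [NormedSpace ℝ E] {f : E → E} {f' : E →L[ℝ] E} {a : E} (hf : HasFDerivAt f f' a) (hfa : f a = a)
    (hf' : ‖f'‖ < 1) : ∀ᶠ x in nhds a, Tendsto (fun n => f^[n] x) atTop (nhds a) := by
  obtain ⟨ρ, hρ, hρ1⟩ := exists_between hf'
  have hρ0 : 0 ≤ ρ := (norm_nonneg f').trans hρ.le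
  have hcontr : ∀ᶠ x in nhds a, ‖f x - a‖ ≤ ρ * ‖x - a‖ := by
    filter_upwards [hf.isLittleO.def (sub_pos.2 hρ)] with x hx
    calc ‖f x - a‖ = ‖(f x - f a - f' (x - a)) + f' (x - a)‖ := by rw [hfa, sub_add_cancel]
      _ ≤ (ρ - ‖f'‖) * ‖x - a‖ + ‖f'‖ * ‖x - a‖ := norm_add_le_of_le hx (f'.le_opNorm _)
      _ = ρ * ‖x - a‖ := by ring
  obtain ⟨r, hr, hball⟩ := Metric.eventually_nhds_iff.1 hcontr
  filter_upwards [Metric.ball_mem_nhds a hr] with x hx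
  rw [mem_ball_iff_norm] at hx
  have hbound : ∀ n, ‖f^[n] x - a‖ ≤ ρ ^ n * ‖x - a‖ := fun n => by
    induction n with
    | zero => simp
    | succ n ih =>
      have hnear : dist (f^[n] x) a < r := by
        rw [dist_eq_norm]
        exact (ih.trans (mul_le_of_le_one_left (norm_nonneg _)
          (pow_le_one₀ hρ0 hρ1.le))).trans_lt hx
      rw [Function.iterate_succ_apply', pow_succ', mul_assoc]
      exact (hball hnear).trans (by gcongr)
  rw [tendsto_iff_norm_sub_tendsto_zero]
  refine squeeze_zero (fun _ => norm_nonneg _) hbound ?_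
  simpa using (tendsto_pow_atTop_nhds_zero_of_lt_one hρ0 hρ1).mul_const ‖x - a‖

end Preliminaries

/-! ### Cross-ratio expanding maps -/

/-- The cross-ratio of four points. For `a < b < c < d` it compares the length of the middle
interval `[b, c]`, relative to `[a, d]`, with the lengths of the two gaps. It is invariant under
affine maps and under reversing the order of the points, so no absolute values are needed. -/
noncomputable def crossRatio (a b c d : ℝ) : ℝ :=
  (d - a) * (c - b) / ((b - a) * (d - c))

section CrossRatio

variable {a b c d K : ℝ}

theorem crossRatio_reverse (a b c d : ℝ) : crossRatio d c b a = crossRatio a b c d := by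
  unfold crossRatio
  congr 1 <;> ring

theorem crossRatio_mul_add {α : ℝ} (hα : α ≠ 0) (β a b c d : ℝ) :
    crossRatio (α * a + β) (α * b + β) (α * c + β) (α * d + β) = crossRatio a b c d := by
  unfold crossRatio
  rw [← mul_div_mul_left ((d - a) * (c - b)) _ (pow_ne_zero 2 hα)]
  congr 1 <;> ring

theorem crossRatio_pos (hab : a < b) (hbc : b < c) (hcd : c < d) : 0 < crossRatio a b c d :=
  div_pos (mul_pos (sub_pos.2 (hab.trans (hbc.trans hcd))) (sub_pos.2 hbc))
    (mul_pos (sub_pos.2 hab) (sub_pos.2 hcd))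

theorem sub_le_of_crossRatio_le (hab : a < b) (hbc : b < c) (hcd : c < d)
    (hK : crossRatio a b c d ≤ K) : c - b ≤ K / (K + 2) * (d - a) := by
  have hK0 : 0 < K := (crossRatio_pos hab hbc hcd).trans_le hK
  have hprod : (d - a) * (c - b) ≤ K * ((b - a) * (d - c)) :=
    (div_le_iff₀ (mul_pos (sub_pos.2 hab) (sub_pos.2 hcd))).1 hK
  have hleft : c - b ≤ K * (b - a) := by
    refine le_of_mul_le_mul_left (hprod.trans ?_) (by linarith : 0 < d - a)
    nlinarith [mul_pos hK0 (sub_pos.2 hab)]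
  have hright : c - b ≤ K * (d - c) := by
    refine le_of_mul_le_mul_left (hprod.trans ?_) (by linarith : 0 < d - a)
    nlinarith [mul_pos hK0 (sub_pos.2 hcd)]
  rw [div_mul_eq_mul_div, le_div_iff₀ (by linarith)]
  linarith

theorem div_le_crossRatio (hab : a < b) (hbc : b < c) (hcd : c < d) :
    (c - b) / (d - c) ≤ crossRatio a b c d := by
  unfold crossRatio
  rw [mul_div_mul_comm]
  refine le_mul_of_one_le_left (div_pos (sub_pos.2 hbc) (sub_pos.2 hcd)).le ?_
  rw [one_le_div (sub_pos.2 hab)]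
  linarith

theorem crossRatio_le_mul_div (hab : a < b) (hbc : b < c) (hcd : c < d)
    (hK : d - a ≤ K * (b - a)) : crossRatio a b c d ≤ K * ((c - b) / (d - c)) := by
  unfold crossRatio
  rw [mul_div_mul_comm]
  exact mul_le_mul_of_nonneg_right ((div_le_iff₀ (sub_pos.2 hab)).2 hK)
    (div_pos (sub_pos.2 hbc) (sub_pos.2 hcd)).le

theorem crossRatio_lt_of_extend {a' d' : ℝ} (ha : a' ≤ a) (hab : a < b) (hbc : b < c)
    (hcd : c < d) (hd : d < d') : crossRatio a' b c d' < crossRatio a b c d := by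
  unfold crossRatio
  rw [div_lt_div_iff₀ (mul_pos (by linarith) (by linarith)) (mul_pos (by linarith) (by linarith))]
  have h₁ : 0 < (d' - d) * ((b - a) * (c - a)) :=
    mul_pos (by linarith) (mul_pos (by linarith) (by linarith))
  have h₂ : 0 ≤ (a - a') * ((d - c) * (d - b)) :=
    mul_nonneg (by linarith) (mul_nonneg (by linarith) (by linarith))
  have h₃ : 0 ≤ (a - a') * ((d' - d) * (d - a)) :=
    mul_nonneg (by linarith) (mul_nonneg (by linarith) (by linarith))
  linear_combination (c - b) * (h₁ + h₂ + h₃)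

theorem crossRatio_le_crossRatio_sq (hab : a < b) (hbc : b < c) (hcd : c < d)
    (hside : 0 ≤ a ∨ d ≤ 0) :
    crossRatio a b c d ≤ crossRatio (a ^ 2) (b ^ 2) (c ^ 2) (d ^ 2) := by
  have hpos : 0 < (b + a) * (d + c) := by
    rcases hside with h | h
    · exact mul_pos (by linarith) (by linarith)
    · exact mul_pos_of_neg_of_neg (by linarith) (by linarith)
  have hfactor : crossRatio (a ^ 2) (b ^ 2) (c ^ 2) (d ^ 2) =
      crossRatio a b c d * ((d + a) * (c + b) / ((b + a) * (d + c))) := by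
    unfold crossRatio
    rw [div_mul_div_comm]
    congr 1 <;> ring
  rw [hfactor]
  refine le_mul_of_one_le_right (crossRatio_pos hab hbc hcd).le ((one_le_div hpos).2 ?_)
  linear_combination mul_nonneg (sub_nonneg.2 (hbc.trans hcd).le) (sub_nonneg.2 (hab.trans hbc).le)

end CrossRatio

/-- A continuous map that does not decrease the cross-ratio of four points in an interval on which
it is injective. This is the integrated form of the condition of nonpositive Schwarzian derivative
and, unlike the latter, it makes no reference to derivatives. -/
structure CrossRatioExpanding (f : ℝ → ℝ) : Prop where
  continuous : Continuous f
  crossRatio_le : ∀ ⦃a b c d : ℝ⦄, a < b → b < c → c < d → InjOn f (Icc a d) →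
    crossRatio a b c d ≤ crossRatio (f a) (f b) (f c) (f d)

theorem crossRatioExpanding_sq : CrossRatioExpanding fun x => x ^ 2 where
  continuous := continuous_pow 2
  crossRatio_le a b c d hab hbc hcd hinj := by
    refine crossRatio_le_crossRatio_sq hab hbc hcd ?_
    by_contra! hcon
    have hm : 0 < min (-a) d := lt_min (neg_pos.2 hcon.1) hcon.2
    have hml := min_le_left (-a) d
    have hmr := min_le_right (-a) d
    have := hinj (⟨by linarith, hmr⟩ : min (-a) d ∈ Icc a d)
      (⟨by linarith, by linarith⟩ : -min (-a) d ∈ Icc a d) (neg_sq _).symm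
    linarith

theorem crossRatioExpanding_mul_add {α : ℝ} (hα : α ≠ 0) (β : ℝ) :
    CrossRatioExpanding fun x => α * x + β where
  continuous := by fun_prop
  crossRatio_le a b c d _ _ _ _ := (crossRatio_mul_add hα β a b c d).ge

theorem crossRatioExpanding_neg : CrossRatioExpanding fun x => -x := by
  simpa using crossRatioExpanding_mul_add (neg_ne_zero.2 one_ne_zero) 0

theorem crossRatioExpanding_id : CrossRatioExpanding id where
  continuous := continuous_id
  crossRatio_le _ _ _ _ _ _ _ _ := le_rfl

theorem bijOn_neg_Icc (a b : ℝ) : BijOn (fun x => -x) (Icc a b) (Icc (-b) (-a)) := by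
  rw [← image_neg_Icc]
  exact neg_injective.injOn.bijOn_image

namespace CrossRatioExpanding

variable {f h : ℝ → ℝ} {a b A B α β K : ℝ}

theorem comp (hh : CrossRatioExpanding h) (hf : CrossRatioExpanding f) :
    CrossRatioExpanding fun x => h (f x) where
  continuous := hh.continuous.comp hf.continuous
  crossRatio_le a b c d hab hbc hcd hinj := by
    have hfinj : InjOn f (Icc a d) := fun x hx y hy hxy => hinj hx hy (congrArg h hxy)
    have had : a ≤ d := (hab.trans (hbc.trans hcd)).le
    have ha : a ∈ Icc a d := left_mem_Icc.2 had
    have hb : b ∈ Icc a d := ⟨hab.le, (hbc.trans hcd).le⟩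
    have hc : c ∈ Icc a d := ⟨(hab.trans hbc).le, hcd.le⟩
    have hd : d ∈ Icc a d := right_mem_Icc.2 had
    have himage : InjOn h (f '' Icc a d) := by
      rintro _ ⟨x, hx, rfl⟩ _ ⟨y, hy, rfl⟩ hxy
      rw [hinj hx hy hxy]
    refine (hf.crossRatio_le hab hbc hcd hfinj).trans ?_
    rcases hf.continuous.continuousOn.strictMonoOn_of_injOn_Icc' had hfinj with hmono | hanti
    · exact hh.crossRatio_le (hmono ha hb hab) (hmono hb hc hbc) (hmono hc hd hcd)
        (himage.mono (intermediate_value_Icc had hf.continuous.continuousOn))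
    · rw [← crossRatio_reverse (f a), ← crossRatio_reverse (h (f a))]
      exact hh.crossRatio_le (hanti hc hd hcd) (hanti hb hc hbc) (hanti ha hb hab)
        (himage.mono (intermediate_value_Icc' had hf.continuous.continuousOn))

theorem neg (hf : CrossRatioExpanding f) : CrossRatioExpanding fun x => -f x :=
  crossRatioExpanding_neg.comp hf

theorem iterate (hf : CrossRatioExpanding f) (n : ℕ) : CrossRatioExpanding f^[n] := by
  induction n with
  | zero => exact crossRatioExpanding_id
  | succ n ih => exact ih.comp hf

theorem exists_bijOn_Icc_of_strictMonoOn (hf : CrossRatioExpanding f) (hab : a < b)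
    (hmono : StrictMonoOn f (Icc a b)) (hbij : BijOn f (Icc a b) (Icc A B))
    (hAα : A < α) (hαβ : α < β) (hβB : β < B) (hK : crossRatio A α β B ≤ K) :
    ∃ a' b', a' < b' ∧ Icc a' b' ⊆ Icc a b ∧ BijOn f (Icc a' b') (Icc α β) ∧
      b' - a' ≤ K / (K + 2) * (b - a) := by
  have ha : a ∈ Icc a b := left_mem_Icc.2 hab.le
  have hb : b ∈ Icc a b := right_mem_Icc.2 hab.le
  obtain ⟨x, hx, rfl⟩ := hbij.surjOn (⟨hAα.le, (hαβ.trans hβB).le⟩ : α ∈ Icc A B)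
  obtain ⟨y, hy, rfl⟩ := hbij.surjOn (⟨(hAα.trans hαβ).le, hβB.le⟩ : β ∈ Icc A B)
  obtain ⟨a₀, ha₀, rfl⟩ := hbij.surjOn (left_mem_Icc.2 (hAα.trans (hαβ.trans hβB)).le)
  obtain ⟨b₀, hb₀, rfl⟩ := hbij.surjOn (right_mem_Icc.2 (hAα.trans (hαβ.trans hβB)).le)
  obtain rfl : a₀ = a :=
    le_antisymm ((hmono.le_iff_le ha₀ ha).1 (hbij.mapsTo ha).1) ha₀.1
  obtain rfl : b₀ = b :=
    le_antisymm hb₀.2 ((hmono.le_iff_le hb hb₀).1 (hbij.mapsTo hb).2)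
  have hax : a₀ < x := (hmono.lt_iff_lt ha hx).1 hAα
  have hxy : x < y := (hmono.lt_iff_lt hx hy).1 hαβ
  have hyb : y < b₀ := (hmono.lt_iff_lt hy hb).1 hβB
  have hsub : Icc x y ⊆ Icc a₀ b₀ := Icc_subset_Icc hx.1 hy.2
  refine ⟨x, y, hxy, hsub, ⟨(hmono.mono hsub).monotoneOn.mapsTo_Icc, (hmono.mono hsub).injOn,
    intermediate_value_Icc hxy.le hf.continuous.continuousOn⟩, ?_⟩
  exact sub_le_of_crossRatio_le hax hxy hyb
    ((hf.crossRatio_le hax hxy hyb hbij.injOn).trans hK)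

theorem exists_bijOn_Icc (hf : CrossRatioExpanding f) (hab : a < b)
    (hbij : BijOn f (Icc a b) (Icc A B)) (hAα : A < α) (hαβ : α < β) (hβB : β < B)
    (hK : crossRatio A α β B ≤ K) :
    ∃ a' b', a' < b' ∧ Icc a' b' ⊆ Icc a b ∧ BijOn f (Icc a' b') (Icc α β) ∧
      b' - a' ≤ K / (K + 2) * (b - a) := by
  rcases hf.continuous.continuousOn.strictMonoOn_of_injOn_Icc' hab.le hbij.injOn with
    hmono | hanti
  · exact hf.exists_bijOn_Icc_of_strictMonoOn hab hmono hbij hAα hαβ hβB hK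
  · have hK' : crossRatio (-B) (-β) (-α) (-A) ≤ K := by
      rw [← crossRatio_reverse]
      simpa using (crossRatio_mul_add (neg_ne_zero.2 one_ne_zero) 0 A α β B).trans_le hK
    obtain ⟨a', b', hab', hsub, hbij', hlen⟩ := hf.neg.exists_bijOn_Icc_of_strictMonoOn hab
      hanti.neg ((bijOn_neg_Icc A B).comp hbij) (neg_lt_neg hβB) (neg_lt_neg hαβ)
      (neg_lt_neg hAα) hK'
    refine ⟨a', b', hab', hsub, ?_, hlen⟩
    simpa [Function.comp_def] using (bijOn_neg_Icc (-β) (-α)).comp hbij'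

end CrossRatioExpanding

/-! ### Renormalization of even maps -/

/-- The even map `x ↦ φ (x ^ 2)`. Even unimodal maps are encoded by their profile `φ`, which is
injective near `0`, where the even map itself has its fold. -/
def evenMap (φ : ℝ → ℝ) (x : ℝ) : ℝ :=
  φ (x ^ 2)

/-- The profile of the period doubling renormalization of `evenMap φ`: the second iterate with its
sign reversed, so that the critical value stays below the critical point. No rescaling is done. -/
def renorm (φ : ℝ → ℝ) (u : ℝ) : ℝ :=
  -φ (φ u ^ 2)

/-- How far the critical value of `evenMap φ` lies below the critical point `0`. -/
def critDepth (φ : ℝ → ℝ) : ℝ :=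
  -φ 0

/-- The sum of the second and third points of the critical orbit of `evenMap φ`. It is negative
when the third point is farther below the critical point than the second is above it. -/
def returnGap (φ : ℝ → ℝ) : ℝ :=
  φ (φ 0 ^ 2) + φ (φ (φ 0 ^ 2) ^ 2)

/-- The critical orbit of `evenMap φ` has, under every renormalization, the initial order pattern
of the Feigenbaum map. -/
def FeigenbaumKneading (φ : ℝ → ℝ) : Prop :=
  ∀ n, 0 < critDepth (renorm^[n] φ) ∧ returnGap (renorm^[n] φ) < 0

section Renormalization

variable {φ : ℝ → ℝ}

theorem evenMap_eq_of_abs_eq (φ : ℝ → ℝ) {x y : ℝ} (h : |x| = |y|) : evenMap φ x = evenMap φ y :=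
  congrArg φ (sq_eq_sq_iff_abs_eq_abs x y |>.2 h)

theorem abs_evenMap_iterate_abs (φ : ℝ → ℝ) (k : ℕ) (x : ℝ) :
    |(evenMap φ)^[k] (|x|)| = |(evenMap φ)^[k] x| := by
  cases k with
  | zero => exact abs_abs x
  | succ k =>
    rw [Function.iterate_succ_apply, Function.iterate_succ_apply,
      evenMap_eq_of_abs_eq φ (abs_abs x)]

theorem evenMap_renorm (φ : ℝ → ℝ) (x : ℝ) :
    evenMap (renorm φ) x = -evenMap φ (evenMap φ x) :=
  rfl

theorem evenMap_iterate_two_pow (φ : ℝ → ℝ) (n : ℕ) (x : ℝ) :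
    (evenMap φ)^[2 ^ n] x = (-1) ^ n * evenMap (renorm^[n] φ) x := by
  induction n generalizing x with
  | zero => simp
  | succ n ih =>
    have hsign : |(-1) ^ n * evenMap (renorm^[n] φ) x| = |evenMap (renorm^[n] φ) x| := by
      simp [abs_mul]
    rw [pow_succ, mul_two, Function.iterate_add_apply, ih, ih, evenMap_eq_of_abs_eq _ hsign,
      Function.iterate_succ_apply', evenMap_renorm]
    ring

theorem abs_evenMap_iterate_two_pow_mul (φ : ℝ → ℝ) (n k : ℕ) (x : ℝ) :
    |(evenMap φ)^[2 ^ n * k] x| = |(evenMap (renorm^[n] φ))^[k] x| := by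
  induction k with
  | zero => rfl
  | succ k ih =>
    rw [mul_add_one, add_comm, Function.iterate_add_apply, evenMap_iterate_two_pow,
      Function.iterate_succ_apply', evenMap_eq_of_abs_eq _ ih]
    simp [abs_mul]

theorem critDepth_renorm (φ : ℝ → ℝ) : critDepth (renorm φ) = φ (critDepth φ ^ 2) := by
  simp [critDepth, renorm]

theorem returnGap_eq (φ : ℝ → ℝ) :
    returnGap φ = critDepth (renorm φ) + φ (critDepth (renorm φ) ^ 2) := by
  simp [returnGap, critDepth, renorm]

theorem returnGap_of_critDepth_renorm_eq_zero (h : critDepth (renorm φ) = 0) :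
    returnGap φ = -critDepth φ := by
  rw [returnGap_eq, h, zero_pow two_ne_zero, zero_add, critDepth, neg_neg]

theorem critDepth_renorm_renorm_of_returnGap_eq_zero (h : returnGap φ = 0) :
    critDepth (renorm (renorm φ)) = critDepth (renorm φ) := by
  have hφ : φ (critDepth (renorm φ) ^ 2) = -critDepth (renorm φ) := by
    linarith [returnGap_eq φ]
  rw [critDepth_renorm (renorm φ), renorm, hφ, neg_sq, hφ, neg_neg]

theorem returnGap_renorm_of_returnGap_eq_zero (h : returnGap φ = 0) :
    returnGap (renorm φ) = 2 * critDepth (renorm φ) := by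
  have hdepth := critDepth_renorm_renorm_of_returnGap_eq_zero h
  rw [returnGap_eq, hdepth, ← critDepth_renorm (renorm φ), hdepth, two_mul]

end Renormalization

/-! ### Parameter selection -/

/-- A parameter interval for the family `φ` on which the critical value stays below the critical
point, at whose left end the second point of the critical orbit has not yet risen above it, and at
whose right end the third point has come back too high for renormalizability. -/
structure RenormBracket (φ : ℝ → ℝ → ℝ) (a b : ℝ) : Prop where
  lt : a < b
  critDepth_pos : ∀ g ∈ Icc a b, 0 < critDepth (φ g)
  critDepth_renorm_left : critDepth (renorm (φ a)) ≤ 0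
  critDepth_renorm_right : 0 < critDepth (renorm (φ b))
  returnGap_right : 0 ≤ returnGap (φ b)

section ParameterSelection

open scoped Topology

variable {φ : ℝ → ℝ → ℝ} {a b : ℝ}

theorem contDiff_renorm (hφ : ContDiff ℝ 1 ↿φ) : ContDiff ℝ 1 ↿(fun g => renorm (φ g)) :=
  (hφ.comp (contDiff_fst.prodMk (hφ.pow 2))).neg

theorem contDiff_renorm_iterate (hφ : ContDiff ℝ 1 ↿φ) (n : ℕ) :
    ContDiff ℝ 1 ↿(fun g => renorm^[n] (φ g)) := by
  induction n with
  | zero => exact hφ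
  | succ n ih => simpa only [Function.iterate_succ_apply'] using contDiff_renorm ih

theorem continuous_critDepth (hφ : Continuous ↿φ) : Continuous fun g => critDepth (φ g) :=
  (hφ.comp (continuous_id.prodMk continuous_const)).neg

theorem continuous_returnGap (hφ : Continuous ↿φ) : Continuous fun g => returnGap (φ g) := by
  have happly : ∀ {w : ℝ → ℝ}, Continuous w → Continuous fun g => φ g (w g) := fun hw =>
    hφ.comp (continuous_id.prodMk hw)
  exact (happly ((happly continuous_const).pow 2)).add
    (happly ((happly ((happly continuous_const).pow 2)).pow 2))

/-- The value at `critDepth ^ 2` differs from the value `-critDepth` at `0` only to second order. -/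
theorem eventually_critDepth_renorm_nonpos (hφ : ContDiff ℝ 1 ↿φ) {c : ℝ}
    (hc : critDepth (φ c) = 0) :
    ∀ᶠ g in 𝓝 c, 0 ≤ critDepth (φ g) → critDepth (renorm (φ g)) ≤ 0 := by
  obtain ⟨K, t, ht, hK⟩ := (hφ.contDiffAt (x := (c, (0 : ℝ)))).exists_lipschitzOnWith
  have hdepth : Tendsto (fun g => critDepth (φ g)) (𝓝 c) (𝓝 0) :=
    hc ▸ (continuous_critDepth hφ.continuous).tendsto c
  have hzero : ∀ᶠ g in 𝓝 c, (g, (0 : ℝ)) ∈ t :=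
    (tendsto_id.prodMk_nhds tendsto_const_nhds).eventually ht
  have hsq : ∀ᶠ g in 𝓝 c, (g, critDepth (φ g) ^ 2) ∈ t := by
    refine (tendsto_id.prodMk_nhds ?_).eventually ht
    simpa using hdepth.pow 2
  have hsmall : ∀ᶠ g in 𝓝 c, K * critDepth (φ g) < 1 := by
    refine (hdepth.const_mul (K : ℝ)).eventually_lt_const ?_
    simp
  filter_upwards [hzero, hsq, hsmall] with g h0 h1 h2 hnonneg
  have hlip : |φ g (critDepth (φ g) ^ 2) - φ g 0| ≤ K * critDepth (φ g) ^ 2 := by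
    simpa [Prod.dist_eq, Real.dist_eq, Function.HasUncurry.uncurry, sq_nonneg] using
      hK.dist_le_mul _ h1 _ h0
  have hφ0 : φ g 0 = -critDepth (φ g) := (neg_neg _).symm
  rw [critDepth_renorm]
  nlinarith [le_abs_self (φ g (critDepth (φ g) ^ 2) - φ g 0)]

theorem RenormBracket.exists_renorm (hφ : ContDiff ℝ 1 ↿φ) (h : RenormBracket φ a b) :
    ∃ a' b', RenormBracket (fun g => renorm (φ g)) a' b' ∧ Icc a' b' ⊆ Icc a b ∧
      ∀ g ∈ Icc a' b', returnGap (φ g) < 0 := by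
  have hφ₁ := contDiff_renorm hφ
  have hdepth₁ := continuous_critDepth hφ₁.continuous
  have hdepth₂ := continuous_critDepth (contDiff_renorm hφ₁).continuous
  obtain ⟨c, hc, hc0, hpos⟩ := exists_last_zero hdepth₁.continuousOn h.lt.le
    h.critDepth_renorm_left h.critDepth_renorm_right
  have hgap_c : returnGap (φ c) < 0 := by
    rw [returnGap_of_critDepth_renorm_eq_zero hc0]
    exact neg_neg_of_pos (h.critDepth_pos c ⟨hc.1, hc.2.le⟩)
  obtain ⟨d, hd, hd0, hneg⟩ := exists_first_zero
    (continuous_returnGap hφ.continuous).continuousOn hc.2.le hgap_c h.returnGap_right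
  have hd1 : 0 < critDepth (renorm (φ d)) := hpos d hd
  obtain ⟨m, hcm, hmd⟩ := exists_between hd.1
  have hright : ∀ᶠ g in 𝓝 d, 0 < critDepth (renorm (renorm (φ g))) ∧
      0 < returnGap (renorm (φ g)) := by
    refine (hdepth₂.continuousAt.eventually_const_lt ?_).and
      ((continuous_returnGap hφ₁.continuous).continuousAt.eventually_const_lt ?_)
    · exact hd1.trans_eq (critDepth_renorm_renorm_of_returnGap_eq_zero hd0).symm
    · exact (mul_pos two_pos hd1).trans_eq (returnGap_renorm_of_returnGap_eq_zero hd0).symm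
  obtain ⟨a', ha', hca', ham⟩ :=
    (((eventually_critDepth_renorm_nonpos hφ₁ hc0).filter_mono nhdsWithin_le_nhds).and
      (Ioo_mem_nhdsGT hcm)).exists
  obtain ⟨b', hb', hmb', hbd⟩ :=
    ((hright.filter_mono nhdsWithin_le_nhds).and (Ioo_mem_nhdsLT hmd)).exists
  have hpos' : ∀ g ∈ Icc a' b', 0 < critDepth (renorm (φ g)) := fun g hg =>
    hpos g ⟨hca'.trans_le hg.1, (hg.2.trans hbd.le).trans hd.2⟩
  refine ⟨a', b', ⟨ham.trans hmb', hpos', ?_, hb'.1, hb'.2.le⟩, ?_, fun g hg => ?_⟩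
  · exact ha' (hpos' a' (left_mem_Icc.2 (ham.trans hmb').le)).le
  · exact Icc_subset_Icc (hc.1.trans hca'.le) (hbd.le.trans hd.2)
  · exact hneg g ⟨hca'.le.trans hg.1, hg.2.trans_lt hbd⟩

theorem RenormBracket.exists_feigenbaumKneading (hφ : ContDiff ℝ 1 ↿φ) (h : RenormBracket φ a b) :
    ∃ g ∈ Icc a b, FeigenbaumKneading (φ g) := by
  obtain ⟨s, hs0, hbracket, hnested⟩ := exists_seq_of_forall_exists_step
    (P := fun n (I : ℝ × ℝ) => RenormBracket (fun g => renorm^[n] (φ g)) I.1 I.2)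
    (R := fun n I J => Icc J.1 J.2 ⊆ Icc I.1 I.2 ∧
      ∀ g ∈ Icc J.1 J.2, returnGap (renorm^[n] (φ g)) < 0) (x₀ := (a, b)) h
    fun n I hI => by
      obtain ⟨a', b', hbracket, hsub⟩ := hI.exists_renorm (contDiff_renorm_iterate hφ n)
      exact ⟨(a', b'), by simpa only [Function.iterate_succ_apply'] using hbracket, hsub⟩
  obtain ⟨g, hg⟩ := IsCompact.nonempty_iInter_of_sequence_nonempty_isCompact_isClosed
    (fun n => Icc (s n).1 (s n).2) (fun n => (hnested n).1)
    (fun n => nonempty_Icc.2 (hbracket n).lt.le) isCompact_Icc fun n => isClosed_Icc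
  rw [mem_iInter] at hg
  exact ⟨g, by simpa [hs0] using hg 0, fun n =>
    ⟨(hbracket n).critDepth_pos g (hg n), (hnested n).2 g (hg (n + 1))⟩⟩

end ParameterSelection

/-! ### Real bounds for one renormalization -/

/-- `evenMap φ` is unimodal on the interval `[-p, p]` bounded by its fixed point `p`, and `φ`
extends injectively to the left of the critical point, up to `-e`, by a definite factor more
(`7 / 5`) than it covers inside the interval. This extension makes the cross-ratio estimates
uniform over all renormalizations. -/
structure RenormLevel (φ : ℝ → ℝ) (p e : ℝ) : Prop where
  crossRatioExpanding : CrossRatioExpanding φ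
  pos : 0 < p
  extension_pos : 0 < e
  neg_lt_apply_zero : -p < φ 0
  apply_sq : φ (p ^ 2) = p
  strictMonoOn : StrictMonoOn φ (Icc (-e) (p ^ 2))
  apply_extension_le : φ (-e) ≤ -(7 / 5 * p)
  apply_sq_lt : ∀ t ∈ Ico 0 p, φ (t ^ 2) < t

theorem CrossRatioExpanding.evenMap {φ : ℝ → ℝ} (hφ : CrossRatioExpanding φ) :
    CrossRatioExpanding (evenMap φ) :=
  hφ.comp crossRatioExpanding_sq

theorem CrossRatioExpanding.renorm {φ : ℝ → ℝ} (hφ : CrossRatioExpanding φ) :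
    CrossRatioExpanding (renorm φ) :=
  (hφ.evenMap.comp hφ).neg

theorem strictMonoOn_evenMap {φ : ℝ → ℝ} {z : ℝ} (h : StrictMonoOn φ (Icc 0 (z ^ 2))) :
    StrictMonoOn (evenMap φ) (Icc 0 z) := fun x hx y hy hxy =>
  h ⟨sq_nonneg x, pow_le_pow_left₀ hx.1 hx.2 2⟩ ⟨sq_nonneg y, pow_le_pow_left₀ hy.1 hy.2 2⟩
    (pow_lt_pow_left₀ hxy hx.1 two_ne_zero)

namespace RenormLevel

variable {φ : ℝ → ℝ} {p e q : ℝ}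

theorem strictMonoOn_evenMap (h : RenormLevel φ p e) : StrictMonoOn (evenMap φ) (Icc 0 p) :=
  _root_.strictMonoOn_evenMap (h.strictMonoOn.mono
    (Icc_subset_Icc_left (neg_nonpos.2 h.extension_pos.le)))

theorem apply_zero_neg (h : RenormLevel φ p e) : φ 0 < 0 := by
  simpa using h.apply_sq_lt 0 (left_mem_Ico.2 h.pos)

theorem critDepth_lt (h : RenormLevel φ p e) : critDepth φ < p :=
  neg_lt.1 h.neg_lt_apply_zero

theorem evenMap_mem_Icc (h : RenormLevel φ p e) {x : ℝ} (hx : |x| ≤ p) :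
    evenMap φ x ∈ Icc (-p) p := by
  rw [← evenMap_eq_of_abs_eq φ (abs_abs x)]
  have hmem : |x| ∈ Icc 0 p := ⟨abs_nonneg x, hx⟩
  have hzero : evenMap φ 0 = φ 0 := congrArg φ (zero_pow two_ne_zero)
  constructor
  · exact (hzero ▸ h.neg_lt_apply_zero.le).trans
      (h.strictMonoOn_evenMap.monotoneOn (left_mem_Icc.2 h.pos.le) hmem hmem.1)
  · exact (h.strictMonoOn_evenMap.monotoneOn hmem (right_mem_Icc.2 h.pos.le) hx).trans
      h.apply_sq.le

theorem exists_flip (h : RenormLevel φ p e) : ∃ q ∈ Ioo 0 p, φ (q ^ 2) = -q := by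
  have hcont : ContinuousOn (fun x => evenMap φ x + x) (Icc 0 p) :=
    (h.crossRatioExpanding.evenMap.continuous.add continuous_id).continuousOn
  obtain ⟨q, hq, hq0⟩ := intermediate_value_Ioo h.pos.le hcont (show (0 : ℝ) ∈ Ioo _ _ from
    ⟨by simpa [evenMap] using h.apply_zero_neg, by simpa [evenMap, h.apply_sq] using h.pos⟩)
  exact ⟨q, hq, eq_neg_of_add_eq_zero_left hq0⟩

theorem flip_lt_critDepth (h : RenormLevel φ p e) (hq : q ∈ Ioo 0 p) (hflip : φ (q ^ 2) = -q) :
    q < critDepth φ := by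
  have := h.strictMonoOn_evenMap (left_mem_Icc.2 h.pos.le) (Ioo_subset_Icc_self hq) hq.1
  simp only [evenMap, zero_pow two_ne_zero, hflip] at this
  exact lt_neg_of_lt_neg this

theorem crossRatio_le (h : RenormLevel φ p e) {b c : ℝ} (hb : -e < b) (hbc : b < c)
    (hc : c < p ^ 2) : crossRatio (-e) b c (p ^ 2) ≤ crossRatio (φ (-e)) (φ b) (φ c) p := by
  simpa only [h.apply_sq] using
    h.crossRatioExpanding.crossRatio_le hb hbc hc h.strictMonoOn.injOn

/-- The extension gives a factor `6 = (7 / 5 + 1) / (7 / 5 - 1)`. -/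
theorem div_le_six_mul_div (h : RenormLevel φ p e) {b c : ℝ} (hb : -e < b) (hbc : b < c)
    (hc : c < p ^ 2) (hφb : -p ≤ φ b) :
    (c - b) / (p ^ 2 - c) ≤ 6 * ((φ c - φ b) / (p - φ c)) := by
  have hmem : ∀ {x}, -e < x → x < p ^ 2 → x ∈ Icc (-e) (p ^ 2) := fun h₁ h₂ => ⟨h₁.le, h₂.le⟩
  have hep : -e ≤ p ^ 2 := (hb.trans (hbc.trans hc)).le
  have hφ_left := h.strictMonoOn (left_mem_Icc.2 hep) (hmem hb (hbc.trans hc)) hb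
  have hφ_mid := h.strictMonoOn (hmem hb (hbc.trans hc)) (hmem (hb.trans hbc) hc) hbc
  have hφ_right := h.strictMonoOn (hmem (hb.trans hbc) hc) (right_mem_Icc.2 hep) hc
  rw [h.apply_sq] at hφ_right
  calc (c - b) / (p ^ 2 - c) ≤ crossRatio (-e) b c (p ^ 2) := div_le_crossRatio hb hbc hc
    _ ≤ crossRatio (φ (-e)) (φ b) (φ c) p := h.crossRatio_le hb hbc hc
    _ ≤ 6 * ((φ c - φ b) / (p - φ c)) :=
      crossRatio_le_mul_div hφ_left hφ_mid hφ_right (by linarith [h.apply_extension_le])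

theorem mul_flip_le (h : RenormLevel φ p e) (hq : q ∈ Ioo 0 p) (hflip : φ (q ^ 2) = -q) :
    7 / 5 * q ≤ p := by
  obtain ⟨hq0, hqp⟩ := hq
  have hsq : q ^ 2 < p ^ 2 := pow_lt_pow_left₀ hqp hq0.le two_ne_zero
  have hbound := h.div_le_six_mul_div (neg_lt_zero.2 h.extension_pos) (pow_pos hq0 2) hsq
    h.neg_lt_apply_zero.le
  rw [hflip, sub_zero, ← mul_div_assoc, div_le_div_iff₀ (by linarith) (by linarith)] at hbound
  have hquad : q ^ 2 ≤ 6 * (p - q) ^ 2 := by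
    refine le_of_mul_le_mul_right ?_ (by linarith : 0 < p + q)
    calc q ^ 2 * (p + q) ≤ 6 * (-q - φ 0) * (p ^ 2 - q ^ 2) := by linarith
      _ ≤ 6 * (p - q) * (p ^ 2 - q ^ 2) :=
        mul_le_mul_of_nonneg_right (by linarith [h.neg_lt_apply_zero]) (sub_pos.2 hsq).le
      _ = 6 * (p - q) ^ 2 * (p + q) := by ring
  nlinarith

theorem exists_apply_sq_eq_flip (h : RenormLevel φ p e) (hq : q ∈ Ioo 0 p)
    (hflip : φ (q ^ 2) = -q) (hdepth : critDepth (renorm φ) ≤ q) :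
    ∃ s ∈ Ioo q p, critDepth φ ≤ s ∧ φ (s ^ 2) = q ∧ p ≤ 140 * (p - s) := by
  have hratio := h.mul_flip_le hq hflip
  have hq_depth := h.flip_lt_critDepth hq hflip
  obtain ⟨hq0, hqp⟩ := hq
  obtain ⟨s, hs, hφs⟩ := intermediate_value_Icc h.critDepth_lt.le
    h.crossRatioExpanding.evenMap.continuous.continuousOn (show q ∈ Icc _ _ from
      ⟨(critDepth_renorm φ).symm.trans_le hdepth, hqp.le.trans_eq h.apply_sq.symm⟩)
  have hφs : φ (s ^ 2) = q := hφs
  have hqs : q < s := hq_depth.trans_le hs.1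
  have hsp : s < p := hs.2.lt_of_ne (by rintro rfl; exact hqp.ne (hφs ▸ h.apply_sq))
  refine ⟨s, ⟨hqs, hsp⟩, hs.1, hφs, ?_⟩
  have hsq : s ^ 2 < p ^ 2 := pow_lt_pow_left₀ hsp (hq0.trans hqs).le two_ne_zero
  have hbound := h.div_le_six_mul_div (b := q ^ 2) (by linarith [h.extension_pos, sq_nonneg q])
    (pow_lt_pow_left₀ hqs hq0.le two_ne_zero) hsq (by linarith)
  rw [hflip, hφs] at hbound
  have hthirty : 6 * ((q - -q) / (p - q)) ≤ 30 := by
    rw [← mul_div_assoc, div_le_iff₀ (by linarith)]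
    linarith
  have hsq_bound : s ^ 2 - q ^ 2 ≤ 30 * (p ^ 2 - s ^ 2) :=
    (div_le_iff₀ (sub_pos.2 hsq)).1 (hbound.trans hthirty)
  have hp_sq : p * p ≤ 140 * (p - s) * p := by nlinarith
  exact le_of_mul_le_mul_right hp_sq h.pos

theorem strictMonoOn_renorm (h : RenormLevel φ p e) {I : Set ℝ} (hI : I ⊆ Icc (-e) (p ^ 2))
    (hmaps : MapsTo φ I (Icc (-p) 0)) : StrictMonoOn (renorm φ) I := by
  intro x hx y hy hxy
  have hφxy := h.strictMonoOn (hI hx) (hI hy) hxy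
  have hmem : ∀ z ∈ I, φ z ^ 2 ∈ Icc (-e) (p ^ 2) := fun z hz =>
    ⟨by linarith [h.extension_pos, sq_nonneg (φ z)],
      sq_le_sq' (hmaps hz).1 ((hmaps hz).2.trans h.pos.le)⟩
  exact neg_lt_neg (h.strictMonoOn (hmem y hy) (hmem x hx) (by nlinarith [(hmaps hy).2]))

theorem exists_extension (h : RenormLevel φ p e) (hq : q ∈ Ioo 0 p) (hflip : φ (q ^ 2) = -q) :
    ∃ e' > 0, StrictMonoOn (renorm φ) (Icc (-e') (q ^ 2)) ∧ renorm φ (-e') = -p := by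
  have hsq : q ^ 2 < p ^ 2 := pow_lt_pow_left₀ hq.2 hq.1.le two_ne_zero
  obtain ⟨x, hx, hφx⟩ := intermediate_value_Icc (neg_nonpos.2 h.extension_pos.le)
    h.crossRatioExpanding.continuous.continuousOn
    (⟨by linarith [h.apply_extension_le, h.pos], h.neg_lt_apply_zero.le⟩ : -p ∈ Icc _ _)
  have hx0 : x < 0 := hx.2.lt_of_ne (by rintro rfl; exact h.neg_lt_apply_zero.ne' hφx)
  have hsub : Icc x (q ^ 2) ⊆ Icc (-e) (p ^ 2) := Icc_subset_Icc hx.1 hsq.le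
  refine ⟨-x, neg_pos.2 hx0, ?_, ?_⟩
  · rw [neg_neg]
    refine h.strictMonoOn_renorm hsub ?_
    have hmaps := (h.strictMonoOn.mono hsub).monotoneOn.mapsTo_Icc
    rw [hφx, hflip] at hmaps
    exact hmaps.mono_right (Icc_subset_Icc_right (neg_nonpos.2 hq.1.le))
  · rw [neg_neg, renorm, hφx, neg_sq, h.apply_sq]

theorem exists_apply_sq_eq_zero (h : RenormLevel φ p e) (hq : q ∈ Ioo 0 p)
    (hflip : φ (q ^ 2) = -q) (hdepth : 0 < critDepth (renorm φ)) :
    ∃ z ∈ Ioo q (critDepth φ), φ (z ^ 2) = 0 := by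
  have hqc := h.flip_lt_critDepth hq hflip
  exact intermediate_value_Ioo hqc.le h.crossRatioExpanding.evenMap.continuous.continuousOn
    ⟨hflip.trans_lt (neg_neg_of_pos hq.1), hdepth.trans_eq (critDepth_renorm φ)⟩

/-- A fixed point `a < q` of the renormalization would violate the cross-ratio inequality for
`0 < a < q < z`, where `φ (z ^ 2) = 0`: the two inner points are fixed and the outer points are
moved outwards. -/
theorem renorm_apply_sq_ne (h : RenormLevel φ p e) (hq : q ∈ Ioo 0 p) (hflip : φ (q ^ 2) = -q)
    (hdepth : 0 < critDepth (renorm φ)) {a : ℝ} (ha : a ∈ Ioo 0 q) :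
    renorm φ (a ^ 2) ≠ a := by
  intro hfix
  obtain ⟨z, ⟨hqz, hzc⟩, hφz⟩ := h.exists_apply_sq_eq_zero hq hflip hdepth
  have hz0 : 0 < z := hq.1.trans hqz
  have hsq : z ^ 2 ≤ p ^ 2 := pow_le_pow_left₀ hz0.le (hzc.trans h.critDepth_lt).le 2
  have hsub : Icc 0 (z ^ 2) ⊆ Icc (-e) (p ^ 2) :=
    Icc_subset_Icc (neg_nonpos.2 h.extension_pos.le) hsq
  have hmaps := (h.strictMonoOn.mono hsub).monotoneOn.mapsTo_Icc
  rw [hφz] at hmaps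
  have hinj : InjOn (evenMap (renorm φ)) (Icc 0 z) :=
    (_root_.strictMonoOn_evenMap (h.strictMonoOn_renorm hsub
      (hmaps.mono_right (Icc_subset_Icc_left h.neg_lt_apply_zero.le)))).injOn
  have hle := h.crossRatioExpanding.renorm.evenMap.crossRatio_le ha.1 ha.2 hqz hinj
  have hq_fix : evenMap (renorm φ) q = q := by rw [evenMap, renorm, hflip, neg_sq, hflip, neg_neg]
  have hz_image : evenMap (renorm φ) z = critDepth φ := by
    rw [evenMap, renorm, hφz, zero_pow two_ne_zero, critDepth]
  have hzero_image : evenMap (renorm φ) 0 = -critDepth (renorm φ) := by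
    rw [evenMap, zero_pow two_ne_zero, critDepth, neg_neg]
  rw [hq_fix, hz_image, hzero_image, show evenMap (renorm φ) a = a from hfix] at hle
  exact hle.not_gt (crossRatio_lt_of_extend (neg_nonpos.2 hdepth.le) ha.1 ha.2 hqz hzc)

theorem renorm_apply_sq_lt (h : RenormLevel φ p e) (hq : q ∈ Ioo 0 p) (hflip : φ (q ^ 2) = -q)
    (hdepth : 0 < critDepth (renorm φ)) : ∀ t ∈ Ico 0 q, renorm φ (t ^ 2) < t := by
  intro t ht
  by_contra! hge
  have hcont : ContinuousOn (fun x => evenMap (renorm φ) x - x) (Icc 0 t) :=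
    (h.crossRatioExpanding.renorm.evenMap.continuous.sub continuous_id).continuousOn
  have hneg : evenMap (renorm φ) 0 - 0 < 0 := by
    simpa [evenMap, critDepth] using hdepth
  obtain ⟨a, ha, ha0⟩ := intermediate_value_Ioc ht.1 hcont ⟨hneg, sub_nonneg.2 hge⟩
  exact h.renorm_apply_sq_ne hq hflip hdepth ⟨ha.1, ha.2.trans_lt ht.2⟩ (sub_eq_zero.1 ha0)

theorem critDepth_renorm_lt (h : RenormLevel φ p e) (hq : q ∈ Ioo 0 p) (hflip : φ (q ^ 2) = -q)
    (hgap : returnGap φ < 0) : critDepth (renorm φ) < q := by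
  by_contra! hle
  have hdepth : critDepth φ ∈ Icc 0 p :=
    ⟨neg_nonneg.2 h.apply_zero_neg.le, h.critDepth_lt.le⟩
  have hlt : critDepth (renorm φ) ≤ p := by
    rw [critDepth_renorm, ← h.apply_sq]
    exact h.strictMonoOn_evenMap.monotoneOn hdepth (right_mem_Icc.2 h.pos.le) hdepth.2
  have hmono : φ (q ^ 2) ≤ φ (critDepth (renorm φ) ^ 2) :=
    h.strictMonoOn_evenMap.monotoneOn (Ioo_subset_Icc_self hq) ⟨hq.1.le.trans hle, hlt⟩ hle
  linarith [returnGap_eq φ]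

theorem exists_renorm (h : RenormLevel φ p e) (hdepth : 0 < critDepth (renorm φ))
    (hgap : returnGap φ < 0) :
    ∃ q, (∃ e', RenormLevel (renorm φ) q e') ∧ q < p ∧ φ (q ^ 2) = -q := by
  obtain ⟨q, hq, hflip⟩ := h.exists_flip
  obtain ⟨e', he', hmono, hext⟩ := h.exists_extension hq hflip
  exact ⟨q, ⟨e',
    { crossRatioExpanding := h.crossRatioExpanding.renorm
      pos := hq.1
      extension_pos := he'
      neg_lt_apply_zero := neg_lt.1 (h.critDepth_renorm_lt hq hflip hgap)
      apply_sq := by rw [renorm, hflip, neg_sq, hflip, neg_neg]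
      strictMonoOn := hmono
      apply_extension_le := hext.trans_le (neg_le_neg (h.mul_flip_le hq hflip))
      apply_sq_lt := h.renorm_apply_sq_lt hq hflip hdepth }⟩, hq.2, hflip⟩

end RenormLevel

/-! ### Infinitely renormalizable maps -/

/-- All renormalizations of `evenMap φ` are unimodal on the intervals `[-p n, p n]` with uniform
extensions, and `evenMap φ` permutes, up to sign, the `2 ^ n` images of `[-p n, p n]`. The fixed
point `p (n + 1)` of one renormalization is the point that the previous one sends to its
negative. -/
structure RenormTower (φ : ℝ → ℝ) (p : ℕ → ℝ) : Prop where
  level : ∀ n, ∃ e, RenormLevel (renorm^[n] φ) (p n) e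
  lt : ∀ n, p (n + 1) < p n
  flip : ∀ n, (renorm^[n] φ) (p (n + 1) ^ 2) = -p (n + 1)

theorem RenormLevel.exists_renormTower {φ : ℝ → ℝ} {p₀ e : ℝ} (h : RenormLevel φ p₀ e)
    (hφ : FeigenbaumKneading φ) : ∃ p : ℕ → ℝ, p 0 = p₀ ∧ RenormTower φ p := by
  obtain ⟨p, hp0, hlevel, hstep⟩ := exists_seq_of_forall_exists_step
    (P := fun n x => ∃ e, RenormLevel (renorm^[n] φ) x e)
    (R := fun n x y => y < x ∧ (renorm^[n] φ) (y ^ 2) = -y) ⟨e, h⟩ fun n x ⟨_, hx⟩ => by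
      simpa only [Function.iterate_succ_apply'] using
        hx.exists_renorm (by simpa only [Function.iterate_succ_apply'] using (hφ (n + 1)).1)
          (hφ n).2
  exact ⟨p, hp0, hlevel, fun n => (hstep n).1, fun n => (hstep n).2⟩

theorem RenormLevel.exists_bijOn_evenMap {φ : ℝ → ℝ} {p e q : ℝ} (h : RenormLevel φ p e)
    (hq : q ∈ Ioo 0 p) (hflip : φ (q ^ 2) = -q) (hdepth : critDepth (renorm φ) ≤ q) :
    ∃ s ∈ Ioo q p, p ≤ 140 * (p - s) ∧ BijOn (evenMap φ) (Icc q s) (Icc (-q) q) ∧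
      MapsTo (evenMap φ) (Icc (-q) q) (Icc (-s) (-q)) := by
  obtain ⟨s, hs, hdepth_le, hφs, hps⟩ := h.exists_apply_sq_eq_flip hq hflip hdepth
  have hq_image : evenMap φ q = -q := hflip
  have hmono := h.strictMonoOn_evenMap.mono (Icc_subset_Icc hq.1.le hs.2.le)
  have hmaps := hmono.monotoneOn.mapsTo_Icc
  have hsurj := intermediate_value_Icc hs.1.le
    h.crossRatioExpanding.evenMap.continuous.continuousOn
  rw [hq_image, show evenMap φ s = q from hφs] at hmaps hsurj
  refine ⟨s, hs, hps, ⟨hmaps, hmono.injOn, hsurj⟩, fun x hx => ?_⟩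
  have hxq : |x| ≤ q := abs_le.2 hx
  have hx_mem : |x| ∈ Icc 0 p := ⟨abs_nonneg x, hxq.trans hq.2.le⟩
  rw [← evenMap_eq_of_abs_eq φ (abs_abs x), ← hq_image]
  refine ⟨?_, h.strictMonoOn_evenMap.monotoneOn hx_mem (Ioo_subset_Icc_self hq) hxq⟩
  calc -s ≤ evenMap φ 0 := by
        rw [evenMap, zero_pow two_ne_zero]
        exact neg_le.1 hdepth_le
    _ ≤ evenMap φ |x| :=
        h.strictMonoOn_evenMap.monotoneOn (left_mem_Icc.2 h.pos.le) hx_mem hx_mem.1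

namespace RenormTower

variable {φ : ℝ → ℝ} {p : ℕ → ℝ}

theorem pos (T : RenormTower φ p) (n : ℕ) : 0 < p n :=
  let ⟨_, h⟩ := T.level n
  h.pos

theorem succ_mem_Ioo (T : RenormTower φ p) (n : ℕ) : p (n + 1) ∈ Ioo 0 (p n) :=
  ⟨T.pos _, T.lt n⟩

theorem mul_succ_le (T : RenormTower φ p) (n : ℕ) : 7 / 5 * p (n + 1) ≤ p n :=
  let ⟨_, h⟩ := T.level n
  h.mul_flip_le (T.succ_mem_Ioo n) (T.flip n)

theorem tendsto_zero (T : RenormTower φ p) : Tendsto p atTop (nhds 0) := by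
  have hle : ∀ n, p n ≤ (5 / 7) ^ n * p 0 := fun n => by
    induction n with
    | zero => simp
    | succ n ih =>
      rw [pow_succ']
      linarith [T.mul_succ_le n]
  refine squeeze_zero (fun n => (T.pos n).le) hle ?_
  simpa using (tendsto_pow_atTop_nhds_zero_of_lt_one (r := (5 / 7 : ℝ)) (by norm_num)
    (by norm_num)).mul_const (p 0)

theorem crossRatioExpanding (T : RenormTower φ p) : CrossRatioExpanding (evenMap φ) :=
  let ⟨_, h⟩ := T.level 0
  h.crossRatioExpanding.evenMap

theorem critDepth_renorm_lt (T : RenormTower φ p) (n : ℕ) :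
    critDepth (renorm (renorm^[n] φ)) < p (n + 1) := by
  obtain ⟨_, h⟩ := T.level (n + 1)
  rw [← Function.iterate_succ_apply' renorm]
  exact h.critDepth_lt

theorem abs_iterate_le (T : RenormTower φ p) {n m : ℕ} (hm : 2 ^ n ∣ m) {x : ℝ}
    (hx : |x| ≤ p n) : |(evenMap φ)^[m] x| ≤ p n := by
  obtain ⟨_, h⟩ := T.level n
  obtain ⟨k, rfl⟩ := hm
  rw [abs_evenMap_iterate_two_pow_mul]
  induction k with
  | zero => exact hx
  | succ k ih =>
    rw [Function.iterate_succ_apply']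
    exact abs_le.2 (h.evenMap_mem_Icc ih)

theorem iterate_zero_mem_Icc (T : RenormTower φ p) {n m : ℕ} (hm : 2 ^ n ∣ m) :
    (evenMap φ)^[m] 0 ∈ Icc (-p n) (p n) :=
  abs_le.1 (T.abs_iterate_le hm (abs_zero.trans_le (T.pos n).le))

theorem crossRatio_center_le (T : RenormTower φ p) (n : ℕ) :
    crossRatio (-p n) (-p (n + 1)) (p (n + 1)) (p n) ≤ 280 := by
  have hratio := T.mul_succ_le n
  have hpos := T.pos (n + 1)
  have hlt := T.lt n
  unfold crossRatio
  rw [div_le_iff₀ (mul_pos (by linarith) (by linarith))]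
  nlinarith

/-- Of the two intervals of level `n + 1` inside `[-p n, p n]`, `[α, β]` is the one that does not
contain the critical point. -/
theorem exists_return_interval (T : RenormTower φ p) (n : ℕ) :
    ∃ α β, -p n < α ∧ α < β ∧ β < p n ∧ crossRatio (-p n) α β (p n) ≤ 280 ∧
      BijOn (evenMap φ)^[2 ^ n] (Icc α β) (Icc (-p (n + 1)) (p (n + 1))) ∧
      MapsTo (evenMap φ)^[2 ^ n] (Icc (-p (n + 1)) (p (n + 1))) (Icc α β) := by
  obtain ⟨_, h⟩ := T.level n
  obtain ⟨s, ⟨hqs, hsp⟩, hps, hbij, hmaps⟩ :=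
    h.exists_bijOn_evenMap (T.succ_mem_Ioo n) (T.flip n) (T.critDepth_renorm_lt n).le
  have hq := T.pos (n + 1)
  have hcross : crossRatio (-p n) (p (n + 1)) s (p n) ≤ 280 := by
    unfold crossRatio
    rw [div_le_iff₀ (mul_pos (by linarith) (by linarith))]
    nlinarith
  have hneg := bijOn_neg_Icc (-s) (-p (n + 1))
  have hneg' := bijOn_neg_Icc (-p (n + 1)) (p (n + 1))
  have hiter := funext (evenMap_iterate_two_pow φ n)
  rw [neg_neg, neg_neg] at hneg
  rw [neg_neg] at hneg'
  rcases neg_one_pow_eq_or ℝ n with hsign | hsign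
  · simp only [hsign, one_mul] at hiter
    rw [hiter]
    refine ⟨-s, -p (n + 1), by linarith, by linarith, by linarith, ?_, ?_, hmaps⟩
    · rw [← crossRatio_reverse, ← crossRatio_mul_add (neg_ne_zero.2 one_ne_zero) 0]
      simpa using hcross
    · exact (hbij.comp hneg).congr fun x _ => evenMap_eq_of_abs_eq _ (abs_neg x)
  · simp only [hsign, neg_one_mul] at hiter
    rw [hiter]
    exact ⟨p (n + 1), s, by linarith, hqs, hsp, hcross, hneg'.comp hbij, fun x hx =>
      ⟨le_neg_of_le_neg (hmaps hx).2, neg_le_of_neg_le (hmaps hx).1⟩⟩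

theorem exists_bijOn_iterate_subinterval (T : RenormTower φ p) {n i : ℕ} {a b α β : ℝ}
    (hab : a < b) (hbij : BijOn (evenMap φ)^[i] (Icc a b) (Icc (-p n) (p n)))
    (hα : -p n < α) (hαβ : α < β) (hβ : β < p n) (hcross : crossRatio (-p n) α β (p n) ≤ 280) :
    ∃ a' b', a' < b' ∧ BijOn (evenMap φ)^[i] (Icc a' b') (Icc α β) ∧
      b' - a' ≤ 140 / 141 * (b - a) ∧
      ∀ x ∈ Icc a b, (evenMap φ)^[i] x ∈ Icc α β → x ∈ Icc a' b' := by
  obtain ⟨a', b', hab', hsub, hbij', hlen⟩ :=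
    (T.crossRatioExpanding.iterate i).exists_bijOn_Icc hab hbij hα hαβ hβ hcross
  refine ⟨a', b', hab', hbij', by linarith, fun x hx hfx => ?_⟩
  rwa [← hbij.injOn.mem_image_iff hsub hx, hbij'.image_eq]

/-- Among the `2 ^ n` intervals of level `n`, `[a, b]` is the one that is `i` steps away from the
central interval `[-p n, p n]`. -/
theorem exists_bijOn_iterate (T : RenormTower φ p) (n : ℕ) : ∀ i < 2 ^ n, ∃ a b, a < b ∧
    BijOn (evenMap φ)^[i] (Icc a b) (Icc (-p n) (p n)) ∧
    b - a ≤ (140 / 141) ^ n * (2 * p 0) ∧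
    ∀ m, 2 ^ n ∣ m + i → (evenMap φ)^[m] 0 ∈ Icc a b := by
  induction n with
  | zero =>
    intro i hi
    obtain rfl : i = 0 := by simpa using hi
    exact ⟨-p 0, p 0, neg_lt_self (T.pos 0), bijOn_id _, by linarith, fun m hm =>
      T.iterate_zero_mem_Icc hm⟩
  | succ n ih =>
    intro i hi
    rw [pow_succ, mul_two] at hi
    rcases lt_or_ge i (2 ^ n) with hin | hin
    · obtain ⟨a, b, hab, hbij, hlen, hmem⟩ := ih i hin
      obtain ⟨a', b', hab', hbij', hlen', hmem'⟩ := T.exists_bijOn_iterate_subinterval hab hbij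
        (neg_lt_neg (T.lt n)) (neg_lt_self (T.pos _)) (T.lt n) (T.crossRatio_center_le n)
      refine ⟨a', b', hab', hbij', by rw [pow_succ']; linarith, fun m hm => ?_⟩
      refine hmem' _ (hmem m ((pow_dvd_pow 2 n.le_succ).trans hm)) ?_
      rw [← Function.iterate_add_apply, add_comm i]
      exact T.iterate_zero_mem_Icc hm
    · obtain ⟨j, rfl⟩ := Nat.exists_eq_add_of_le hin
      obtain ⟨a, b, hab, hbij, hlen, hmem⟩ := ih j (by omega)
      obtain ⟨α, β, hα, hαβ, hβ, hcross, hreturn, hmaps⟩ := T.exists_return_interval n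
      obtain ⟨a', b', hab', hbij', hlen', hmem'⟩ :=
        T.exists_bijOn_iterate_subinterval hab hbij hα hαβ hβ hcross
      refine ⟨a', b', hab', ?_, by rw [pow_succ']; linarith, fun m ⟨c, hc⟩ => ?_⟩
      · rw [Function.iterate_add]
        exact hreturn.comp hbij'
      · obtain ⟨d, rfl⟩ : ∃ d, c = d + 1 := Nat.exists_eq_succ_of_ne_zero (by
          rintro rfl
          have := Nat.two_pow_pos n
          omega)
        have hmj : j + m = 2 ^ n + 2 ^ (n + 1) * d := by
          rw [mul_add_one, pow_succ] at hc
          rw [pow_succ]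
          omega
        refine hmem' _ (hmem m ⟨2 * d + 1, by rw [add_comm, hmj]; ring⟩) ?_
        rw [← Function.iterate_add_apply, hmj, Function.iterate_add_apply]
        exact hmaps (T.iterate_zero_mem_Icc ⟨d, rfl⟩)

theorem dist_iterate_zero_le (T : RenormTower φ p) {n m m' : ℕ} (h : m ≡ m' [MOD 2 ^ n]) :
    dist ((evenMap φ)^[m] 0) ((evenMap φ)^[m'] 0) ≤ (140 / 141) ^ n * (2 * p 0) := by
  obtain ⟨i, hi, hmi⟩ : ∃ i < 2 ^ n, m + i ≡ 0 [MOD 2 ^ n] := by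
    refine ⟨(m * (2 ^ n - 1)) % 2 ^ n, Nat.mod_lt _ (Nat.two_pow_pos n), ?_⟩
    refine ((Nat.mod_modEq _ _).add_left m).trans (Nat.modEq_zero_iff_dvd.2 ⟨m, ?_⟩)
    rw [← mul_one_add, Nat.add_sub_of_le Nat.one_le_two_pow, mul_comm]
  obtain ⟨a, b, -, -, hlen, hmem⟩ := T.exists_bijOn_iterate n i hi
  have hm := hmem m (Nat.modEq_zero_iff_dvd.1 hmi)
  have hm' := hmem m' (Nat.modEq_zero_iff_dvd.1 ((h.symm.add_right i).trans hmi))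
  exact (Real.dist_le_of_mem_Icc hm hm').trans hlen

end RenormTower

/-! ### Codings by the adding machine -/

section Coding

variable {q : ℕ} [Fact q.Prime] {X : Type*} {f : X → X} {ψ : ℤ_[q] → X}

theorem padicInt_dist_natCast_le_iff {m m' n : ℕ} :
    dist (m : ℤ_[q]) m' ≤ (q : ℝ) ^ (-n : ℤ) ↔ m ≡ m' [MOD q ^ n] := by
  rw [Nat.ModEq.comm, Nat.modEq_iff_dvd, dist_eq_norm]
  exact_mod_cast PadicInt.norm_int_le_pow_iff_dvd (p := q) (k := (m - m' : ℤ)) (n := n)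

theorem exists_continuous_extension_of_modEq [MetricSpace X] [CompleteSpace X] {u : ℕ → X}
    (hu : ∀ ε > 0, ∃ n, ∀ m m', m ≡ m' [MOD q ^ n] → dist (u m) (u m') < ε) :
    ∃ ψ : ℤ_[q] → X, Continuous ψ ∧ ∀ m : ℕ, ψ m = u m := by
  let v : range (Nat.cast : ℕ → ℤ_[q]) → X := fun s => u s.2.choose
  have hspec : ∀ s : range (Nat.cast : ℕ → ℤ_[q]), (s.2.choose : ℤ_[q]) = s := fun s =>
    s.2.choose_spec
  have hv : UniformContinuous v := Metric.uniformContinuous_iff.2 fun ε hε => by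
    obtain ⟨n, hn⟩ := hu ε hε
    have hq : (0 : ℝ) < q := Nat.cast_pos.2 (Fact.out (p := q.Prime)).pos
    refine ⟨(q : ℝ) ^ (-n : ℤ), zpow_pos hq _, fun s t hst => ?_⟩
    refine hn _ _ (padicInt_dist_natCast_le_iff.1 ?_)
    rw [hspec s, hspec t]
    exact hst.le
  have hdense : DenseRange (Subtype.val : range (Nat.cast : ℕ → ℤ_[q]) → ℤ_[q]) :=
    Dense.denseRange_val PadicInt.denseRange_natCast
  have hind := isUniformInducing_val (range (Nat.cast : ℕ → ℤ_[q]))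
  refine ⟨_, (uniformContinuous_uniformly_extend hind hdense hv).continuous, fun m => ?_⟩
  have hm : (⟨(m : ℤ_[q]), m, rfl⟩ : range (Nat.cast : ℕ → ℤ_[q])).2.choose = m :=
    Nat.cast_injective (hspec ⟨m, m, rfl⟩)
  exact (uniformly_extend_of_ind hind hdense hv ⟨m, m, rfl⟩).trans (congrArg u hm)

variable [TopologicalSpace X] [T2Space X]

theorem semiconj_add_one_of_natCast (hψ : Continuous ψ) (hf : Continuous f) {x : X}
    (hx : ∀ m : ℕ, ψ m = f^[m] x) : Function.Semiconj ψ (· + 1) f := by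
  refine congrFun (PadicInt.denseRange_natCast.equalizer (by fun_prop) (hf.comp hψ) ?_)
  funext m
  simpa [Function.iterate_succ_apply', hx] using hx (m + 1)

theorem injective_of_semiconj_add_one (hψ : Continuous ψ) (hsemi : Function.Semiconj ψ (· + 1) f)
    (h0 : ∀ z, ψ z = ψ 0 → z = 0) : Function.Injective ψ := by
  intro z z' hz
  have hadd : (fun w => ψ (z + w)) = fun w => ψ (z' + w) := by
    refine PadicInt.denseRange_natCast.equalizer (by fun_prop) (by fun_prop) (funext fun m => ?_)
    have hiter : ∀ y, ψ (y + m) = f^[m] (ψ y) := fun y => by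
      rw [← (hsemi.iterate_right m).eq, add_right_iterate, nsmul_one]
    simp only [Function.comp_apply, hiter, hz]
  refine sub_eq_zero.1 (h0 _ ?_)
  simpa [sub_eq_add_neg] using congrFun hadd (-z')

theorem exists_eq_two_pow_mul_one_add {z : ℤ_[2]} (hz : z ≠ 0) :
    ∃ (n : ℕ) (w : ℤ_[2]), z = 2 ^ n * (1 + 2 * w) := by
  set u := PadicInt.unitCoeff hz
  have hu : (u : ℤ_[2]).zmodRepr = 1 := by
    have hlt := (u : ℤ_[2]).zmodRepr_lt_p
    have hne := (PadicInt.norm_natCast_zmodRepr_eq_one_iff_ne (u : ℤ_[2])).1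
      (PadicInt.norm_natCast_zmodRepr_eq_one_iff.2 (PadicInt.norm_units u))
    omega
  obtain ⟨w, hw⟩ : (2 : ℤ_[2]) ∣ u - 1 := by
    have := (PadicInt.norm_lt_one_iff_dvd _).1 (u : ℤ_[2]).norm_sub_zmodRepr_lt_one
    rwa [hu, Nat.cast_one] at this
  refine ⟨z.valuation, w, ?_⟩
  rw [← hw, add_sub_cancel, mul_comm]
  exact_mod_cast PadicInt.unitCoeff_spec hz

end Coding

/-! ### The attractor of an infinitely renormalizable map -/

namespace RenormTower

variable {φ : ℝ → ℝ} {p : ℕ → ℝ} {ψ : ℤ_[2] → ℝ}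

theorem exists_continuous_coding (T : RenormTower φ p) :
    ∃ ψ : ℤ_[2] → ℝ, Continuous ψ ∧ ∀ m : ℕ, ψ m = (evenMap φ)^[m] 0 := by
  refine exists_continuous_extension_of_modEq fun ε hε => ?_
  have hlim : Tendsto (fun n : ℕ => (140 / 141 : ℝ) ^ n * (2 * p 0)) atTop (nhds 0) := by
    simpa using (tendsto_pow_atTop_nhds_zero_of_lt_one (r := (140 / 141 : ℝ)) (by norm_num)
      (by norm_num)).mul_const (2 * p 0)
  obtain ⟨n, hn⟩ := (hlim.eventually_lt_const hε).exists
  exact ⟨n, fun m m' h => (T.dist_iterate_zero_le h).trans_lt hn⟩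

theorem le_abs_iterate_zero (T : RenormTower φ p) (n k : ℕ) :
    p (n + 1) ≤ |(evenMap φ)^[2 ^ n * (1 + 2 * k)] 0| := by
  obtain ⟨_, h⟩ := T.level n
  have hk : 2 ^ n * (1 + 2 * k) = 2 ^ n + 2 ^ (n + 1) * k := by ring
  have hy := abs_le.2 (T.iterate_zero_mem_Icc (Dvd.intro k rfl : 2 ^ (n + 1) ∣ _))
  rw [hk, Function.iterate_add_apply, evenMap_iterate_two_pow, abs_mul, abs_neg_one_pow, one_mul,
    ← evenMap_eq_of_abs_eq _ (abs_abs ((evenMap φ)^[2 ^ (n + 1) * k] 0))]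
  refine le_abs.2 (Or.inr (le_neg_of_le_neg ?_))
  exact (h.strictMonoOn_evenMap.monotoneOn ⟨abs_nonneg _, hy.trans (T.lt n).le⟩
    (Ioo_subset_Icc_self (T.succ_mem_Ioo n)) hy).trans (T.flip n).le

theorem abs_coding_le (T : RenormTower φ p) (hψ : Continuous ψ)
    (hu : ∀ m : ℕ, ψ m = (evenMap φ)^[m] 0) (z : ℤ_[2]) : |ψ z| ≤ p 0 := by
  refine PadicInt.denseRange_natCast.induction_on z (isClosed_le (by fun_prop) (by fun_prop))
    fun m => ?_
  rw [hu]
  exact abs_le.2 (T.iterate_zero_mem_Icc (one_dvd m))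

theorem le_abs_coding (T : RenormTower φ p) (hψ : Continuous ψ)
    (hu : ∀ m : ℕ, ψ m = (evenMap φ)^[m] 0) (n : ℕ) (w : ℤ_[2]) :
    p (n + 1) ≤ |ψ (2 ^ n * (1 + 2 * w))| := by
  refine PadicInt.denseRange_natCast.induction_on w (isClosed_le (by fun_prop) (by fun_prop))
    fun m => ?_
  have := T.le_abs_iterate_zero n m
  rw [← hu] at this
  exact_mod_cast this

theorem exists_coding (T : RenormTower φ p) : ∃ ψ : ℤ_[2] → ℝ, Continuous ψ ∧
    Function.Injective ψ ∧ Function.Semiconj ψ (· + 1) (evenMap φ) ∧ ψ 0 = 0 ∧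
    ∀ z, |ψ z| < p 0 := by
  obtain ⟨ψ, hψ, hu⟩ := T.exists_continuous_coding
  have hsemi := semiconj_add_one_of_natCast hψ T.crossRatioExpanding.continuous hu
  have h0 : ψ 0 = 0 := by simpa using hu 0
  have hinj : Function.Injective ψ := by
    refine injective_of_semiconj_add_one hψ hsemi fun z hz => ?_
    by_contra hne
    obtain ⟨n, w, rfl⟩ := exists_eq_two_pow_mul_one_add hne
    have := T.le_abs_coding hψ hu n w
    rw [hz, h0, abs_zero] at this
    exact this.not_gt (T.pos _)
  refine ⟨ψ, hψ, hinj, hsemi, h0, fun z => (T.abs_coding_le hψ hu z).lt_of_ne fun hz => ?_⟩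
  obtain ⟨_, h⟩ := T.level 0
  have hfix : evenMap φ (p 0) = p 0 := h.apply_sq
  have hz1 : ψ (z + 1) = p 0 := by
    rw [hsemi.eq, evenMap_eq_of_abs_eq φ (hz.trans (abs_of_pos (T.pos 0)).symm), hfix]
  have hz2 : ψ (z + 1 + 1) = p 0 := by rw [hsemi.eq, hz1, hfix]
  simpa using hinj (hz2.trans hz1.symm)

/-- Below the fixed point `p n` the `n`-th renormalization pushes points down until they pass the
flip point `p (n + 1)`, below which its values are at least `-p (n + 1)`. -/
theorem exists_abs_iterate_le_succ (T : RenormTower φ p) {n : ℕ} {x : ℝ} (hx : |x| < p n) :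
    ∃ k, |(evenMap φ)^[k] x| ≤ p (n + 1) := by
  obtain ⟨_, h⟩ := T.level n
  have hcont := h.crossRatioExpanding.evenMap.continuous.continuousOn (s := Icc (p (n + 1)) |x|)
  have hexit := exists_iterate_lt hcont fun t ht =>
    h.apply_sq_lt t ⟨(T.pos _).le.trans ht.1, ht.2.trans_lt hx⟩
  rcases hi : Nat.find hexit with _ | j
  · exact ⟨0, ((Nat.find_eq_zero hexit).1 hi).le⟩
  have hbelow := Nat.find_spec hexit
  have hge := not_lt.1 (Nat.find_min hexit (j.lt_succ_self.trans_eq hi.symm))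
  rw [hi, Function.iterate_succ_apply'] at hbelow
  refine ⟨2 ^ n * (j + 1), ?_⟩
  rw [abs_evenMap_iterate_two_pow_mul, ← abs_evenMap_iterate_abs, Function.iterate_succ_apply']
  refine abs_le.2 ⟨?_, hbelow.le⟩
  have hle : (evenMap (renorm^[n] φ))^[j] (|x|) ≤ p n := by
    refine (le_abs_self _).trans ?_
    rw [← abs_evenMap_iterate_two_pow_mul]
    exact T.abs_iterate_le (Dvd.intro j rfl) ((abs_abs x).trans_le hx.le)
  exact (T.flip n).ge.trans (h.strictMonoOn_evenMap.monotoneOn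
    (Ioo_subset_Icc_self (T.succ_mem_Ioo n)) ⟨(T.pos _).le.trans hge, hle⟩ hge)

theorem exists_abs_iterate_lt (T : RenormTower φ p) {x : ℝ} (hx : |x| < p 0)
    (havoid : ∀ k n, |(evenMap φ)^[k] x| ≠ p n) (n : ℕ) : ∃ k, |(evenMap φ)^[k] x| < p n := by
  induction n with
  | zero => exact ⟨0, hx⟩
  | succ n ih =>
    obtain ⟨k, hk⟩ := ih
    obtain ⟨j, hj⟩ := T.exists_abs_iterate_le_succ hk
    rw [← Function.iterate_add_apply] at hj
    exact ⟨j + k, hj.lt_of_ne (havoid _ _)⟩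

theorem mapClusterPt_zero (T : RenormTower φ p) {x : ℝ} (hx : |x| < p 0)
    (havoid : ∀ k n, |(evenMap φ)^[k] x| ≠ p n) :
    MapClusterPt 0 atTop fun k => (evenMap φ)^[k] x := by
  rw [Metric.nhds_basis_closedBall.mapClusterPt_iff_frequently]
  intro ε hε
  obtain ⟨n, hn⟩ := (T.tendsto_zero.eventually_le_const hε).exists
  obtain ⟨k, hk⟩ := T.exists_abs_iterate_lt hx havoid n
  refine frequently_atTop.2 fun N => ⟨2 ^ n * N + k, ?_, ?_⟩
  · exact le_add_right (Nat.le_mul_of_pos_left N (Nat.two_pow_pos n))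
  · rw [mem_closedBall_zero_iff, Real.norm_eq_abs, Function.iterate_add_apply]
    exact (T.abs_iterate_le (Dvd.intro N rfl) hk.le).trans hn

end RenormTower

section ExceptionalSet

/-- `ψ` parametrizes an invariant Cantor set of `f` on which `f` is the 2-adic adding machine, and
almost every orbit starting in the open neighbourhood `V` of that set accumulates at its point
`ψ 0`. -/
structure AddingMachineCoding (f : ℝ → ℝ) (ψ : ℤ_[2] → ℝ) (V : Set ℝ) : Prop where
  continuous : Continuous ψ
  injective : Function.Injective ψ
  semiconj : Function.Semiconj ψ (· + 1) f
  isOpen : IsOpen V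
  mem : ∀ z, ψ z ∈ V
  ae_mapClusterPt : ∀ᵐ x, x ∈ V → MapClusterPt (ψ 0) atTop fun n => f^[n] x

theorem countable_preimage_iterate {α : Type*} {f : α → α} (hf : ∀ y, (f ⁻¹' {y}).Countable)
    {s : Set α} (hs : s.Countable) (k : ℕ) : (f^[k] ⁻¹' s).Countable := by
  induction k generalizing s with
  | zero => exact hs
  | succ k ih =>
    rw [Function.iterate_succ', preimage_comp, ← biUnion_preimage_singleton f s]
    exact ih (hs.biUnion fun y _ => hf y)

theorem RenormTower.ae_mapClusterPt_zero {φ : ℝ → ℝ} {p : ℕ → ℝ} (T : RenormTower φ p)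
    (hφ : ∀ y, (evenMap φ ⁻¹' {y}).Countable) :
    ∀ᵐ x, |x| < p 0 → MapClusterPt 0 atTop fun k => (evenMap φ)^[k] x := by
  have hends : (⋃ n, {p n, -p n}).Countable :=
    countable_iUnion fun n => (Set.toFinite {p n, -p n}).countable
  filter_upwards [(countable_iUnion (countable_preimage_iterate hφ hends)).ae_notMem
    MeasureTheory.volume] with x hx hlt
  exact T.mapClusterPt_zero hlt fun k n hkn =>
    hx (mem_iUnion.2 ⟨k, mem_iUnion.2 ⟨n, eq_or_eq_neg_of_abs_eq hkn⟩⟩)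

theorem RenormTower.exists_addingMachineCoding {φ : ℝ → ℝ} {p : ℕ → ℝ} (T : RenormTower φ p)
    (hφ : ∀ y, (evenMap φ ⁻¹' {y}).Countable) :
    ∃ ψ V, AddingMachineCoding (evenMap φ) ψ V := by
  obtain ⟨ψ, hψ, hinj, hsemi, hψ0, hlt⟩ := T.exists_coding
  exact ⟨ψ, {x | |x| < p 0}, hψ, hinj, hsemi, isOpen_lt continuous_abs continuous_const, hlt,
    hψ0.symm ▸ T.ae_mapClusterPt_zero hφ⟩

end ExceptionalSet

/-! ### Product maps of the plane -/

section ProductMaps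

open scoped Polynomial Topology

theorem fwdOrbit_of_isFixedPt {f : ℝ × ℝ → ℝ × ℝ} {x : ℝ × ℝ} (hx : Function.IsFixedPt f x) :
    fwdOrbit f x = {x} := by
  rw [fwdOrbit, funext fun k => hx.iterate k, range_const]

theorem image_range_of_semiconj {X Y : Type*} {f : X → X} {s : Y → Y} {ψ : Y → X}
    (hψ : Function.Semiconj ψ s f) (hs : Function.Surjective s) : f '' range ψ = range ψ := by
  rw [← range_comp, ← hψ.comp_eq, hs.range_comp]

theorem exists_homeomorph_range_of_semiconj {X K : Type*} [TopologicalSpace X] [T2Space X]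
    [TopologicalSpace K] [CompactSpace K] {f : X → X} {s : K → K} {ψ : K → X}
    (hψ : Continuous ψ) (hinj : Function.Injective ψ) (hsemi : Function.Semiconj ψ s f) :
    ∃ e : range ψ ≃ₜ K, ∀ (x : range ψ) (hx : f x ∈ range ψ), e ⟨f x, hx⟩ = s (e x) := by
  let e := (hψ.isClosedEmbedding hinj).isEmbedding.toHomeomorph
  refine ⟨e.symm, fun x hx => ?_⟩
  obtain ⟨z, rfl⟩ := e.surjective x
  rw [e.symm_apply_apply, e.symm_apply_eq]
  exact Subtype.ext (hsemi z).symm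

theorem mapClusterPt_prodMk {ι X Y : Type*} [TopologicalSpace X] [TopologicalSpace Y]
    {l : Filter ι} {u : ι → X} {v : ι → Y} {x : X} {y : Y} (hu : MapClusterPt x l u)
    (hv : Tendsto v l (𝓝 y)) : MapClusterPt (x, y) l fun i => (u i, v i) := by
  rw [((𝓝 x).basis_sets.prod_nhds (𝓝 y).basis_sets).mapClusterPt_iff_frequently]
  rintro ⟨s, t⟩ ⟨hs, ht⟩
  exact (hu.frequently hs).and_eventually (hv ht)

variable {f h : ℝ → ℝ} {a b : ℝ}

theorem isSink_prodMap (ha : f a = a) (hb : h b = b)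
    (hf : ∀ᶠ x in 𝓝 a, Tendsto (fun n => f^[n] x) atTop (𝓝 a))
    (hh : ∀ᶠ y in 𝓝 b, Tendsto (fun n => h^[n] y) atTop (𝓝 b)) :
    IsSink (Prod.map f h) (a, b) 1 := by
  obtain ⟨W, hW, hopen, hmem⟩ := mem_nhds_iff.1 (hf.prod_nhds hh)
  refine ⟨le_rfl, Prod.ext ha hb, W, hopen, hmem, fun x hx => ?_⟩
  simp only [mul_one, Prod.map_iterate]
  exact (hW hx).1.prodMk_nhds (hW hx).2

theorem AddingMachineCoding.isPDCantorAttractor {ψ : ℤ_[2] → ℝ} {V : Set ℝ}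
    (hψ : AddingMachineCoding f ψ V) (hb : h b = b)
    (hh : ∀ᶠ y in 𝓝 b, Tendsto (fun n => h^[n] y) atTop (𝓝 b)) :
    IsPDCantorAttractor (Prod.map f h) (range fun z => (ψ z, b)) := by
  have hcont : Continuous fun z => (ψ z, b) := hψ.continuous.prodMk continuous_const
  have hsemi : Function.Semiconj (fun z => (ψ z, b)) (· + 1) (Prod.map f h) := fun z =>
    Prod.ext (hψ.semiconj z) hb.symm
  obtain ⟨W, hW, hWopen, hbW⟩ := mem_nhds_iff.1 hh
  refine ⟨isCompact_range hcont, image_range_of_semiconj hsemi (add_right_surjective 1),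
    exists_homeomorph_range_of_semiconj hcont
      (fun z w hzw => hψ.injective (Prod.ext_iff.1 hzw).1) hsemi,
    V ×ˢ W, hψ.isOpen.prod hWopen, range_subset_iff.2 fun z => ⟨hψ.mem z, hbW⟩, ?_⟩
  filter_upwards [MeasureTheory.Measure.quasiMeasurePreserving_fst.ae hψ.ae_mapClusterPt]
    with x hx hxU
  refine ⟨(ψ 0, b), ?_, 0, rfl⟩
  simp only [mem_omegaLimit_singleton_iff_mapClusterPt, Prod.map_iterate]
  exact mapClusterPt_prodMk (hx hxU.1) (hW hxU.2)

theorem natDegree_le_totalDegree_toMvPolynomial {R σ : Type*} [CommSemiring R] (i : σ)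
    (P : R[X]) : P.natDegree ≤ (P.toMvPolynomial i).totalDegree := by
  have hX : MvPolynomial.aeval (fun _ => Polynomial.X) (P.toMvPolynomial i) = P := by
    simp [MvPolynomial.aeval_toMvPolynomial]
  simpa [hX] using MvPolynomial.aeval_natDegree_le (n := 1) (P.toMvPolynomial i) le_rfl
    (fun _ : σ => (Polynomial.X : R[X])) fun _ => Polynomial.natDegree_X_le

theorem isPolyMapDegTwo_prodMap_eval {P : ℝ[X]} (hP : 2 ≤ P.natDegree) (Q : ℝ[X]) :
    IsPolyMapDegTwo (Prod.map P.eval Q.eval) := by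
  refine ⟨P.toMvPolynomial 0, Q.toMvPolynomial 1, le_max_of_le_left ?_, fun x => ?_⟩
  · exact hP.trans (natDegree_le_totalDegree_toMvPolynomial 0 P)
  · simp [MvPolynomial.eval_toMvPolynomial, Prod.map]

theorem exists_polynomial_eval_eq_self_and_eval_derivative_eq_zero {F : Type*} [Field F]
    (s : Finset F) : ∃ Q : F[X], ∀ x ∈ s, Q.eval x = x ∧ Q.derivative.eval x = 0 := by
  classical
  have hid : InjOn id (s : Set F) := injOn_id _
  refine ⟨Polynomial.X - Lagrange.nodal s id *
    Lagrange.interpolate s id (Lagrange.nodalWeight s id), fun x hx => ?_⟩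
  have hnodal : (Lagrange.nodal s id).eval x = 0 := Lagrange.eval_nodal_at_node (v := id) hx
  have hderiv : (Lagrange.nodal s id).derivative.eval x = (Lagrange.nodalWeight s id x)⁻¹ := by
    rw [Lagrange.nodalWeight_eq_eval_derivative_nodal hx, inv_inv, id]
  have hinterp : (Lagrange.interpolate s id (Lagrange.nodalWeight s id)).eval x =
      Lagrange.nodalWeight s id x := Lagrange.eval_interpolate_at_node _ hid hx
  constructor
  · simp [hnodal]
  · rw [Polynomial.derivative_sub, Polynomial.derivative_X, Polynomial.derivative_mul,
      Polynomial.eval_sub, Polynomial.eval_one, Polynomial.eval_add, Polynomial.eval_mul,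
      Polynomial.eval_mul, hnodal, hderiv, hinterp,
      inv_mul_cancel₀ (Lagrange.nodalWeight_ne_zero hid hx), zero_mul, add_zero, sub_self]

theorem eventually_tendsto_iterate_eval {Q : ℝ[X]} {a : ℝ} (ha : Q.eval a = a)
    (hQ : Q.derivative.eval a = 0) :
    ∀ᶠ x in 𝓝 a, Tendsto (fun n => Q.eval^[n] x) atTop (𝓝 a) :=
  eventually_tendsto_iterate_of_hasFDerivAt (Q.hasDerivAt a).hasFDerivAt ha (by simp [hQ])

theorem countable_preimage_eval_singleton {R : Type*} [CommRing R] [IsDomain R] {P : R[X]}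
    (hP : P.natDegree ≠ 0) (y : R) : (P.eval ⁻¹' {y}).Countable := by
  have hconst : P ≠ Polynomial.C y := by
    rintro rfl
    exact hP (Polynomial.natDegree_C y)
  rw [Polynomial.preimage_eval_singleton hconst]
  exact (Polynomial.rootSet_finite _ _).countable

end ProductMaps

/-! ### The quartic family -/

/-- The profile of `quartic g`. -/
def quarticProfile (g u : ℝ) : ℝ :=
  1 - g * (1 - u) ^ 2

/-- The even quartic with critical points `0` and `±1`, of which `1` is fixed. The parameter `g`
is chosen to give a Feigenbaum attractor around `0`; meanwhile `1` is a sink. -/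
noncomputable def quartic (g : ℝ) : Polynomial ℝ :=
  1 - Polynomial.C g * (1 - Polynomial.X ^ 2) ^ 2

section QuarticFamily

variable {g : ℝ}

theorem critDepth_quarticProfile (g : ℝ) : critDepth (quarticProfile g) = g - 1 := by
  simp [critDepth, quarticProfile]

theorem renormBracket_quarticProfile : RenormBracket quarticProfile (6 / 5) (9 / 5) where
  lt := by norm_num
  critDepth_pos g hg := by
    rw [critDepth_quarticProfile]
    linarith [hg.1]
  critDepth_renorm_left := by
    rw [critDepth_renorm, critDepth_quarticProfile, quarticProfile]
    norm_num
  critDepth_renorm_right := by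
    rw [critDepth_renorm, critDepth_quarticProfile, quarticProfile]
    norm_num
  returnGap_right := by
    rw [returnGap_eq, critDepth_renorm, critDepth_quarticProfile, quarticProfile, quarticProfile]
    norm_num

theorem contDiff_quarticProfile : ContDiff ℝ 1 ↿quarticProfile :=
  contDiff_const.sub (contDiff_fst.mul ((contDiff_const.sub contDiff_snd).pow 2))

theorem strictMonoOn_quarticProfile (hg : 0 < g) : StrictMonoOn (quarticProfile g) (Iic 1) :=
  fun _ _ _ hy hxy => sub_lt_sub_left (mul_lt_mul_of_pos_left
    (pow_lt_pow_left₀ (sub_lt_sub_left hxy 1) (sub_nonneg.2 hy) two_ne_zero) hg) 1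

theorem crossRatioExpanding_quarticProfile (hg : g ≠ 0) :
    CrossRatioExpanding (quarticProfile g) := by
  convert (crossRatioExpanding_mul_add (neg_ne_zero.2 hg) 1).comp
    (crossRatioExpanding_sq.comp (crossRatioExpanding_mul_add (neg_ne_zero.2 one_ne_zero) 1))
    using 1
  ext u
  simp only [quarticProfile]
  ring

theorem quarticProfile_sq_sub (g t : ℝ) :
    quarticProfile g (t ^ 2) - t = (1 - t) * (1 - g * ((1 - t) * (1 + t) ^ 2)) := by
  rw [quarticProfile]
  ring

theorem exists_quarticProfile_fixedPoint (hg : g ∈ Icc (6 / 5) (9 / 5)) :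
    ∃ p ∈ Ioo (g - 1) 1, g * ((1 - p) * (1 + p) ^ 2) = 1 := by
  obtain ⟨hlo, hhi⟩ := hg
  have hleft : 1 < g * ((1 - (g - 1)) * (1 + (g - 1)) ^ 2) := by
    nlinarith [mul_nonneg (sub_nonneg.2 hlo) (sub_nonneg.2 hhi), sq_nonneg (g - 1)]
  have hcont : Continuous fun x => g * ((1 - x) * (1 + x) ^ 2) := by fun_prop
  exact intermediate_value_Ioo' (by linarith) hcont.continuousOn ⟨by norm_num, hleft⟩

/-- The cubic `(1 - t) * (1 + t) ^ 2` exceeds its value at `p` to the left of `p`, because it does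
so at `0`. -/
theorem quarticProfile_sq_lt {p t : ℝ} (hg : 1 < g) (hp : p < 1)
    (hfix : g * ((1 - p) * (1 + p) ^ 2) = 1) (ht : t ∈ Ico 0 p) : quarticProfile g (t ^ 2) < t := by
  have hp0 : 0 < p := ht.1.trans_lt ht.2
  have hroot : 0 < p ^ 2 + p - 1 := by
    by_contra! h
    nlinarith [mul_nonneg hp0.le (sub_nonneg.2 h)]
  have hcubic : (1 - p) * (1 + p) ^ 2 < (1 - t) * (1 + t) ^ 2 := by
    have : 0 < (p - t) * ((p ^ 2 + p - 1) + (t + p * t + t ^ 2)) := by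
      have := ht.1
      have := sub_pos.2 ht.2
      positivity
    linarith
  have hlt : 1 < g * ((1 - t) * (1 + t) ^ 2) :=
    hfix.symm.trans_lt (mul_lt_mul_of_pos_left hcubic (by linarith))
  refine sub_neg.1 ?_
  rw [quarticProfile_sq_sub]
  exact mul_neg_of_pos_of_neg (by linarith [ht.2]) (by linarith)

theorem exists_renormLevel_quarticProfile (hg : g ∈ Icc (6 / 5) (9 / 5)) :
    ∃ p, RenormLevel (quarticProfile g) p 1 := by
  obtain ⟨p, ⟨hgp, hp1⟩, hfix⟩ := exists_quarticProfile_fixedPoint hg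
  have hg1 : 1 < g := by linarith [hg.1]
  have hg0 : 0 < g := by linarith
  have hp0 : 0 < p := by linarith
  refine ⟨p, crossRatioExpanding_quarticProfile hg0.ne', hp0, one_pos, ?_, ?_, ?_, ?_,
    fun t ht => quarticProfile_sq_lt hg1 hp1 hfix ht⟩
  · simp only [quarticProfile]
    linarith
  · have := quarticProfile_sq_sub g p
    rw [hfix, sub_self, mul_zero] at this
    exact sub_eq_zero.1 this
  · exact (strictMonoOn_quarticProfile hg0).mono fun u hu => hu.2.trans (pow_le_one₀ hp0.le hp1.le)
  · simp only [quarticProfile]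
    linarith [hg.1]

theorem evenMap_quarticProfile (g : ℝ) : evenMap (quarticProfile g) = (quartic g).eval := by
  ext x
  simp [evenMap, quarticProfile, quartic]

theorem natDegree_quartic (hg : g ≠ 0) : (quartic g).natDegree = 4 := by
  unfold quartic
  compute_degree!

theorem eval_quartic_one (g : ℝ) : (quartic g).eval 1 = 1 := by
  simp [quartic]

theorem eval_derivative_quartic_one (g : ℝ) : (quartic g).derivative.eval 1 = 0 := by
  simp [quartic, Polynomial.derivative_pow]

end QuarticFamily

theorem exists_addingMachineCoding_quartic :
    ∃ g ≠ 0, ∃ ψ V, AddingMachineCoding (quartic g).eval ψ V := by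
  obtain ⟨g, hg, hkneading⟩ :=
    renormBracket_quarticProfile.exists_feigenbaumKneading contDiff_quarticProfile
  have hg0 : g ≠ 0 := by linarith [hg.1]
  obtain ⟨_, hlevel⟩ := exists_renormLevel_quarticProfile hg
  obtain ⟨p, -, T⟩ := hlevel.exists_renormTower hkneading
  have hfibers : ∀ y, (evenMap (quarticProfile g) ⁻¹' {y}).Countable := fun y => by
    rw [evenMap_quarticProfile]
    exact countable_preimage_eval_singleton (by simp [natDegree_quartic hg0]) y
  exact ⟨g, hg0, evenMap_quarticProfile g ▸ T.exists_addingMachineCoding hfibers⟩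

/-! ### Coexistence -/

theorem exists_polynomial_forall_nat_lt_eventually_tendsto_iterate (N : ℕ) :
    ∃ Q : Polynomial ℝ, ∀ i < N, Q.eval (i : ℝ) = i ∧
      ∀ᶠ y in nhds (i : ℝ), Tendsto (fun n => Q.eval^[n] y) atTop (nhds i) := by
  obtain ⟨Q, hQ⟩ := exists_polynomial_eval_eq_self_and_eval_derivative_eq_zero
    ((Finset.range N).image ((↑) : ℕ → ℝ))
  refine ⟨Q, fun i hi => ?_⟩
  obtain ⟨hfix, hderiv⟩ := hQ i (Finset.mem_image_of_mem _ (Finset.mem_range.2 hi))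
  exact ⟨hfix, eventually_tendsto_iterate_eval hfix hderiv⟩

theorem exists_polyMap_with_sinks_and_k_PD_attractors_general (S k : ℕ) :
    ∃ f : ℝ × ℝ → ℝ × ℝ, IsPolyMapDegTwo f ∧ HasAtLeastSinks f S ∧
      ∃ A : Fin k → Set (ℝ × ℝ), (∀ i, IsPDCantorAttractor f (A i)) ∧
        Pairwise fun i j => Disjoint (A i) (A j) := by
  obtain ⟨g, hg, ψ, V, hψ⟩ := exists_addingMachineCoding_quartic
  obtain ⟨Q, hQ⟩ := exists_polynomial_forall_nat_lt_eventually_tendsto_iterate (max S k)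
  have hone := eventually_tendsto_iterate_eval (eval_quartic_one g) (eval_derivative_quartic_one g)
  have hsink : ∀ i : Fin S, IsSink (Prod.map (quartic g).eval Q.eval) (1, (i : ℕ)) 1 := fun i =>
    have hi := hQ i (i.2.trans_le (le_max_left S k))
    isSink_prodMap (eval_quartic_one g) hi.1 hone hi.2
  have horbit : ∀ i : Fin S, fwdOrbit (Prod.map (quartic g).eval Q.eval) (1, (i : ℕ)) =
      {(1, ((i : ℕ) : ℝ))} := fun i => fwdOrbit_of_isFixedPt (hsink i).2.1
  refine ⟨Prod.map (quartic g).eval Q.eval,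
    isPolyMapDegTwo_prodMap_eval (by simp [natDegree_quartic hg]) Q,
    ⟨fun i => (1, (i : ℕ)), fun _ => 1, hsink, fun i j hij => ?_⟩,
    fun i => range fun z => (ψ z, ((i : ℕ) : ℝ)), fun i => ?_, fun i j hij => ?_⟩
  · simpa [horbit, Fin.val_inj] using hij
  · have hi := hQ i (i.2.trans_le (le_max_right S k))
    exact hψ.isPDCantorAttractor hi.1 hi.2
  · refine disjoint_range_iff.2 fun z w h => hij (Fin.ext ?_)
    exact Nat.cast_injective (Prod.ext_iff.1 h).2

/-- For every natural number `S` and every `k ∈ {1,2,3}` there exists a polynomial map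
`f : ℝ² → ℝ²` of degree at least 2 having at least `S` distinct sinks and `k` pairwise
disjoint period doubling Cantor attractors. -/
theorem exists_polyMap_with_sinks_and_k_PD_attractors (S k : ℕ) (hk1 : 1 ≤ k) (hk3 : k ≤ 3) :
    ∃ f : ℝ × ℝ → ℝ × ℝ, IsPolyMapDegTwo f ∧ HasAtLeastSinks f S ∧
      ∃ A : Fin k → Set (ℝ × ℝ), (∀ i, IsPDCantorAttractor f (A i)) ∧
        Pairwise fun i j => Disjoint (A i) (A j) :=
  exists_polyMap_with_sinks_and_k_PD_attractors_general S k
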